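/- arXiv:1104.3090 — 2 statements merged into one kernel-verified Lean document; each statement's English description precedes it below -/
import Mathlib

section
/- For every ε > 0 there exists N ∈ ℕ such that for every connected simple graph G on n ≥ N vertices and all vertices s,t of G, the graph G has a walk from s to t visiting every vertex of G of length at most (3 − √2 + ε) · OLP(G,s,t). -/
open SimpleGraph

/-- The value `Σ_{e ∈ E} x e` of an assignment `x` on the edges of `G`. -/
noncomputable def hkValue {V : Type*} (G : SimpleGraph V) (x : Sym2 V → ℝ) : ℝ :=
  ∑ᶠ e ∈ G.edgeSet, x e

/-- The total weight `Σ_{e ∈ δ(S)} x e` of the edges of `G` crossing the cut `(S, Sᶜ)`. -/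
noncomputable def hkCut {V : Type*} (G : SimpleGraph V) (x : Sym2 V → ℝ)
    (S : Set V) : ℝ :=
  ∑ᶠ e ∈ {e ∈ G.edgeSet | ∃ a b, e = s(a, b) ∧ a ∈ S ∧ b ∉ S}, x e

/-- Feasibility for the Held-Karp path relaxation of graph-TSPP on `(G, s, t)`. -/
def HKPathFeasible {V : Type*} (G : SimpleGraph V) (s t : V) (x : Sym2 V → ℝ) : Prop :=
  (∀ e, 0 ≤ x e) ∧
  ∀ S : Set V, S.Nonempty → S ≠ Set.univ →
    ((s ∈ S ↔ t ∈ S) → 2 ≤ hkCut G x S) ∧ (¬(s ∈ S ↔ t ∈ S) → 1 ≤ hkCut G x S)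

/-- The optimum value `OLP(G, s, t)` of the Held-Karp path relaxation on `(G, s, t)`. -/
noncomputable def OLPpath {V : Type*} [Fintype V] (G : SimpleGraph V) (s t : V) : ℝ :=
  sInf {y | ∃ x, HKPathFeasible G s t x ∧ y = hkValue G x}


set_option linter.unusedSectionVars false
set_option linter.unusedVariables false

namespace HKP

/-- mod 2 boundary of an edge set -/
def bd {V ε : Type*} [DecidableEq V] (a b : ε → V) (F : Finset ε) : V → ZMod 2 :=
  fun v => ∑ e ∈ F, ((if a e = v then 1 else 0) + (if b e = v then 1 else 0))

section
variable {V ε : Type*} [DecidableEq V] [DecidableEq ε]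

lemma z2_add_self (x : ZMod 2) : x + x = 0 := CharTwo.add_self_eq_zero x

lemma z2_cases (x : ZMod 2) : x = 0 ∨ x = 1 := by revert x; decide

lemma bd_pair [Fintype V] (a b : ε → V) (F : Finset ε) (g : V → ZMod 2) :
    ∑ v, g v * bd a b F v = ∑ e ∈ F, (g (a e) + g (b e)) := by
  simp only [bd, Finset.mul_sum, mul_add]
  rw [Finset.sum_comm]
  apply Finset.sum_congr rfl
  intro e _
  simp [Finset.sum_add_distrib]

lemma bd_sum [Fintype V] (a b : ε → V) (F : Finset ε) (S : Finset V) :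
    ∑ v ∈ S, bd a b F v
      = ∑ e ∈ F, ((if a e ∈ S then 1 else 0) + (if b e ∈ S then 1 else 0)) := by
  rw [← bd_pair a b F (fun v => if v ∈ S then 1 else 0)]
  simp [Finset.sum_ite_mem]

lemma bd_empty (a b : ε → V) : bd a b ∅ = 0 := by ext v; simp [bd]

lemma bd_single (a b : ε → V) (e : ε) :
    bd a b {e} = Pi.single (a e) 1 + Pi.single (b e) 1 := by
  ext v; simp [bd, Pi.single_apply, eq_comm]

lemma bd_union (a b : ε → V) {A B : Finset ε} (h : Disjoint A B) :
    bd a b (A ∪ B) = bd a b A + bd a b B := by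
  ext v; simp [bd, Finset.sum_union h]

lemma bd_symmDiff (a b : ε → V) (A B : Finset ε) :
    bd a b (symmDiff A B) = bd a b A + bd a b B := by
  have h1 : symmDiff A B = (A \ B) ∪ (B \ A) := rfl
  have hA : A = (A \ B) ∪ (A ∩ B) := by ext; simp; tauto
  have hB : B = (B \ A) ∪ (A ∩ B) := by ext; simp; tauto
  have e1 : bd a b A = bd a b (A \ B) + bd a b (A ∩ B) := by
    conv_lhs => rw [hA]
    apply bd_union
    rw [Finset.disjoint_left]; intro x; simp; tauto
  have e2 : bd a b B = bd a b (B \ A) + bd a b (A ∩ B) := by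
    conv_lhs => rw [hB]
    apply bd_union
    rw [Finset.disjoint_left]; intro x; simp; tauto
  have e3 : bd a b (symmDiff A B) = bd a b (A \ B) + bd a b (B \ A) := by
    rw [h1]; apply bd_union
    rw [Finset.disjoint_left]; intro x; simp; tauto
  rw [e1, e2, e3]
  ext v
  simp only [Pi.add_apply]
  have := z2_add_self (bd a b (A ∩ B) v)
  linear_combination -this

lemma bd_sdiff (a b : ε → V) {A B : Finset ε} (h : B ⊆ A) :
    bd a b (A \ B) = bd a b A + bd a b B := by
  rw [← bd_symmDiff]
  congr 1
  ext x
  simp only [Finset.mem_sdiff, Finset.mem_symmDiff]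
  have := @h x
  tauto

lemma bd_erase (a b : ε → V) {A : Finset ε} {e : ε} (h : e ∈ A) :
    bd a b (A.erase e) = bd a b A + (Pi.single (a e) 1 + Pi.single (b e) 1) := by
  rw [← bd_single, ← bd_sdiff a b (by simpa using h), Finset.sdiff_singleton_eq_erase]

lemma bd_insert (a b : ε → V) {A : Finset ε} {e : ε} (h : e ∉ A) :
    bd a b (insert e A) = bd a b A + (Pi.single (a e) 1 + Pi.single (b e) 1) := by
  rw [← bd_single, Finset.insert_eq, bd_union a b (by simpa using h), add_comm]

lemma fun2_self (f : V → ZMod 2) : f + f = 0 := by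
  ext v; exact z2_add_self _

lemma edge_end (a b : ε → V) {e : ε} {v : V} (h : a e = v ∨ b e = v) :
    ∃ w, (Pi.single (a e) 1 + Pi.single (b e) 1 : V → ZMod 2) = Pi.single v 1 + Pi.single w 1 ∧
      ((a e = v ∧ b e = w) ∨ (b e = v ∧ a e = w)) := by
  rcases h with h | h
  · exact ⟨b e, by rw [h], Or.inl ⟨h, rfl⟩⟩
  · exact ⟨a e, by rw [h, add_comm], Or.inr ⟨h, rfl⟩⟩

lemma bd_subpath (a b : ε → V) : ∀ (n : ℕ) (F : Finset ε) (z : V), F.card ≤ n → bd a b F z = 1 →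
    ∃ P ⊆ F, ∃ z', z' ≠ z ∧ bd a b F z' = 1 ∧ bd a b P = Pi.single z 1 + Pi.single z' 1 := by
  intro n
  induction n with
  | zero =>
    intro F z hF hz
    rw [Nat.le_zero, Finset.card_eq_zero] at hF
    subst hF
    simp [bd] at hz
  | succ n ih =>
    intro F z hF hz
    have : ∃ e ∈ F, ((if a e = z then 1 else 0) + (if b e = z then 1 else 0) : ZMod 2) ≠ 0 := by
      by_contra hcon
      push Not at hcon
      have : bd a b F z = 0 := Finset.sum_eq_zero hcon
      rw [this] at hz; exact absurd hz (by decide)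
    obtain ⟨e, heF, he⟩ := this
    have hend : a e = z ∨ b e = z := by
      by_contra hcon
      push Not at hcon
      simp [hcon.1, hcon.2] at he
    obtain ⟨w, hw, hw'⟩ := edge_end a b hend
    have hwz : w ≠ z := by
      rintro rfl
      apply he
      rcases hw' with ⟨h1, h2⟩ | ⟨h1, h2⟩ <;> simp [h1, h2] <;> decide
    have her := bd_erase a b heF
    rw [hw] at her
    by_cases hZw : bd a b F w = 1
    · exact ⟨{e}, by simpa using heF, w, hwz, hZw, by rw [bd_single, hw]⟩
    · have hZw0 : bd a b F w = 0 := (z2_cases _).resolve_right hZw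
      have h1 : bd a b (F.erase e) w = 1 := by
        rw [her]; simp [hZw0, hwz]
      obtain ⟨P, hP, z', hz'w, hz', hPb⟩ := ih (F.erase e) w
        (by rw [Finset.card_erase_of_mem heF]; omega) h1
      have hz'z : z' ≠ z := by
        rintro rfl
        rw [her] at hz'
        simp [hz, hwz.symm] at hz'
      refine ⟨insert e P, ?_, z', hz'z, ?_, ?_⟩
      · intro y hy
        rcases Finset.mem_insert.1 hy with rfl | hy
        · exact heF
        · exact Finset.mem_of_mem_erase (hP hy)
      · rw [her] at hz'
        simpa [hz'z, hz'w] using hz'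
      · rw [bd_insert a b (fun h => by simpa using hP h), hPb, hw]
        have := fun2_self (Pi.single w 1 : V → ZMod 2)
        linear_combination this

/-- weight relative to J -/
lemma card_symmDiff_wt (J D : Finset ε) :
    ((symmDiff J D).card : ℤ) = J.card + ∑ e ∈ D, (if e ∈ J then (-1 : ℤ) else 1) := by
  have h1 : (symmDiff J D).card = (J \ D).card + (D \ J).card := by
    have : symmDiff J D = (J \ D) ∪ (D \ J) := rfl
    rw [this, Finset.card_union_of_disjoint]
    rw [Finset.disjoint_left]; intro x; simp; tauto
  have h2 := Finset.card_sdiff_add_card_inter J D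
  rw [Finset.sum_ite]
  have h3 : D.filter (fun e => e ∈ J) = J ∩ D := by ext; simp [and_comm]
  have h4 : D.filter (fun e => e ∉ J) = D \ J := by ext; simp
  rw [h3, h4, h1]
  simp
  omega

lemma tjoin_bip [Fintype V] : ∀ (n : ℕ) (E : Finset ε) (a b : ε → V) (c : V → ZMod 2) (x : ε → ℝ)
    (J0 : Finset ε), E.card ≤ n → J0 ⊆ E → (∀ e ∈ E, c (a e) + c (b e) = 1) →
    (∀ e ∈ E, 0 ≤ x e) →
    (∀ S : Finset V, ∑ v ∈ S, bd a b J0 v = 1 →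
      1 ≤ ∑ e ∈ E with ¬ (a e ∈ S ↔ b e ∈ S), x e) →
    ∃ J ⊆ E, bd a b J = bd a b J0 ∧ (J.card : ℝ) ≤ ∑ e ∈ E, x e := by
  intro n
  induction n with
  | zero =>
    intro E a b c x J0 hE hJ0 hc hx hcut
    rw [Nat.le_zero, Finset.card_eq_zero] at hE
    subst hE
    exact ⟨J0, hJ0, rfl, by rw [Finset.subset_empty.1 hJ0]; simp⟩
  | succ n ih =>
  intro E a b c x J0 hE hJ0 hc hx hcut
  classical
  obtain ⟨J, hJm, hJmin⟩ := Finset.exists_min_image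
    (E.powerset.filter (fun J => bd a b J = bd a b J0)) Finset.card
    ⟨J0, by simp [hJ0]⟩
  simp only [Finset.mem_filter, Finset.mem_powerset, and_imp] at hJm hJmin
  obtain ⟨hJE, hJbd⟩ := hJm
  refine ⟨J, hJE, hJbd, ?_⟩
  rw [← hJbd] at hJmin hcut
  rcases J.eq_empty_or_nonempty with rfl | ⟨e0, he0⟩
  · simpa using Finset.sum_nonneg hx
  have hr : (J.erase e0) ⊆ E := (Finset.erase_subset _ _).trans hJE
  obtain ⟨J', hJ'm, hJ'min⟩ := Finset.exists_min_image
    (E.powerset.filter (fun K => ∃ u v, bd a b K = bd a b J + (Pi.single u 1 + Pi.single v 1)))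
    Finset.card
    ⟨J.erase e0, by
      simp only [Finset.mem_filter, Finset.mem_powerset]
      exact ⟨hr, a e0, b e0, bd_erase a b he0⟩⟩
  simp only [Finset.mem_filter, Finset.mem_powerset, and_imp, forall_exists_index] at hJ'm hJ'min
  obtain ⟨hJ'E, u, v, hJ'bd⟩ := hJ'm
  have hlt : J'.card < J.card := by
    have h1 := hJ'min _ hr _ _ (bd_erase a b he0)
    have h2 := Finset.card_erase_lt_of_mem he0
    omega
  have huv : u ≠ v := by
    rintro rfl
    have := hJmin J' hJ'E (by rw [hJ'bd, fun2_self, add_zero])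
    omega
  have hJ'v : ∀ e ∈ J', a e ≠ v ∧ b e ≠ v := by
    intro e he
    by_contra hcon
    have hend : a e = v ∨ b e = v := by tauto
    obtain ⟨w, hw, -⟩ := edge_end a b hend
    have h1 := bd_erase a b he
    rw [hw, hJ'bd] at h1
    have h2 := hJ'min _ ((Finset.erase_subset e _).trans hJ'E) u w (by
      rw [h1]
      have := fun2_self (Pi.single v 1 : V → ZMod 2)
      linear_combination this)
    have h3 := Finset.card_erase_lt_of_mem he
    omega
  have hJ'v0 : bd a b J' v = 0 := by
    apply Finset.sum_eq_zero
    intro e he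
    simp [hJ'v e he]
  have hTv : bd a b J v = 1 := by
    rw [hJ'bd] at hJ'v0
    simp [huv.symm] at hJ'v0
    rcases z2_cases (bd a b J v) with h | h
    · rw [h] at hJ'v0; exact absurd hJ'v0 (by decide)
    · exact h
  set E' := E.filter (fun e => a e ≠ v ∧ b e ≠ v) with hE'
  let N : V → Prop := fun y => ∃ e ∈ E, (a e = v ∧ b e = y) ∨ (b e = v ∧ a e = y)
  have hE'E : E' ⊆ E := Finset.filter_subset _ _
  have hJ'E' : J' ⊆ E' := fun e he => Finset.mem_filter.2 ⟨hJ'E he, hJ'v e he⟩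
  have hNc : ∀ y, N y → c y = c v + 1 := by
    rintro y ⟨e, he, h⟩
    have := hc e he
    have h2 := z2_add_self (c v)
    rcases h with ⟨h1, h2'⟩ | ⟨h1, h2'⟩
    · rw [h1, h2'] at this; linear_combination this - h2
    · rw [h1, h2'] at this; linear_combination this - h2
  have hpar : ∀ F ⊆ E, (F.card : ZMod 2) = ∑ y, c y * bd a b F y := by
    intro F hF
    rw [bd_pair, Finset.sum_congr rfl (fun e he => hc e (hF he))]
    simp
  have hsd : ∀ A B : Finset ε, A ⊆ E' → B ⊆ E' → symmDiff A B ⊆ E' := by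
    intro A B hA hB e he
    rcases Finset.mem_symmDiff.1 he with h | h
    · exact hA h.1
    · exact hB h.1
  have claimQ : ∀ Q ⊆ E', ∀ w w', N w → N w' → bd a b Q = Pi.single w 1 + Pi.single w' 1 →
      J'.card ≤ (symmDiff J' Q).card := by
    intro Q hQ w w' hw hw' hQb
    obtain ⟨f, hfE, hf⟩ := id hw
    have hfE' : f ∉ E' := by
      intro h
      have := (Finset.mem_filter.1 h).2
      tauto
    have hfs : (Pi.single (a f) 1 + Pi.single (b f) 1 : V → ZMod 2)
        = Pi.single v 1 + Pi.single w 1 := by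
      rcases hf with ⟨h1, h2⟩ | ⟨h1, h2⟩
      · rw [h1, h2]
      · rw [h1, h2, add_comm]
    have hfn : f ∉ symmDiff J' Q := fun h => hfE' (hsd _ _ hJ'E' hQ h)
    have h1 := bd_insert a b hfn
    rw [bd_symmDiff, hfs, hJ'bd, hQb] at h1
    have h2 := hJ'min (insert f (symmDiff J' Q)) (by
        intro y hy
        rcases Finset.mem_insert.1 hy with rfl | hy
        · exact hfE
        · exact hE'E (hsd _ _ hJ'E' hQ hy)) u w' (by
        rw [h1]
        have e1 := fun2_self (Pi.single v 1 : V → ZMod 2)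
        have e2 := fun2_self (Pi.single w 1 : V → ZMod 2)
        linear_combination e1 + e2)
    rw [Finset.card_insert_of_notMem hfn] at h2
    have p1 := hpar _ ((hsd _ _ hJ'E' hQ).trans hE'E)
    have p2 := hpar _ hJ'E
    have p3 : ((symmDiff J' Q).card : ZMod 2) = J'.card := by
      rw [p1, p2, bd_symmDiff, hQb]
      simp only [Pi.add_apply, mul_add, Finset.sum_add_distrib, Pi.single_apply]
      simp [hNc w hw, hNc w' hw', z2_add_self]
    rw [ZMod.natCast_eq_natCast_iff'] at p3
    omega
  let wt : Finset ε → ℤ := fun D => ∑ e ∈ D, (if e ∈ J' then (-1 : ℤ) else 1)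
  have claimA : ∀ (k : ℕ) (D : Finset ε), D.card ≤ k → D ⊆ E' → (∀ y, bd a b D y = 1 → N y) →
      0 ≤ wt D := by
    intro k
    induction k with
    | zero =>
      intro D hD _ _
      rw [Nat.le_zero, Finset.card_eq_zero] at hD
      subst hD; simp [wt]
    | succ k ihk =>
      intro D hDk hDE hDN
      by_cases h0 : ∃ y, bd a b D y = 1
      · obtain ⟨w, hw⟩ := h0
        obtain ⟨Q, hQD, w', hw'w, hw', hQb⟩ := bd_subpath a b _ D w le_rfl hw
        have q1 := claimQ Q (hQD.trans hDE) w w' (hDN _ hw) (hDN _ hw') hQb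
        have q2 := card_symmDiff_wt J' Q
        have hQne : Q.Nonempty := by
          rw [Finset.nonempty_iff_ne_empty]
          rintro rfl
          have := congrFun hQb w
          simp [bd_empty, hw'w.symm] at this
        have hcard : (D \ Q).card < D.card := by
          rw [Finset.card_sdiff_of_subset hQD]
          have := hQne.card_pos
          have := Finset.card_le_card hQD
          omega
        have q3 := ihk (D \ Q) (by omega) (Finset.sdiff_subset.trans hDE) (by
          intro y hy
          rw [bd_sdiff a b hQD, hQb] at hy
          by_cases hyw : y = w
          · rw [hyw]; exact hDN _ hw
          by_cases hyw' : y = w'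
          · rw [hyw']; exact hDN _ hw'
          apply hDN
          simpa [hyw, hyw'] using hy)
        have q4 : wt D = wt (D \ Q) + wt Q := (Finset.sum_sdiff hQD).symm
        have q5 : 0 ≤ wt Q := by show 0 ≤ ∑ e ∈ Q, _; omega
        omega
      · have hD0 : bd a b D = 0 := by
          ext y
          exact (z2_cases _).resolve_right (fun h => h0 ⟨y, h⟩)
        have q1 := hJ'min (symmDiff J' D) ((hsd _ _ hJ'E' hDE).trans hE'E) u v (by
          rw [bd_symmDiff, hD0, hJ'bd, add_zero])
        have q2 := card_symmDiff_wt J' D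
        show 0 ≤ ∑ e ∈ D, _
        omega
  -- key: path from u
  have claimP : ∀ P ⊆ E', ∀ w, N w → bd a b P = Pi.single u 1 + Pi.single w 1 →
      (J.card : ℤ) ≤ J'.card + wt P + 1 := by
    intro P hP w hw hPb
    obtain ⟨f, hfE, hf⟩ := id hw
    have hfE' : f ∉ E' := by
      intro h
      have := (Finset.mem_filter.1 h).2
      tauto
    have hfs : (Pi.single (a f) 1 + Pi.single (b f) 1 : V → ZMod 2)
        = Pi.single v 1 + Pi.single w 1 := by
      rcases hf with ⟨h1, h2⟩ | ⟨h1, h2⟩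
      · rw [h1, h2]
      · rw [h1, h2, add_comm]
    have hfn : f ∉ symmDiff J' P := fun h => hfE' (hsd _ _ hJ'E' hP h)
    have h1 := bd_insert a b hfn
    rw [bd_symmDiff, hfs, hJ'bd, hPb] at h1
    have h2 := hJmin (insert f (symmDiff J' P)) (by
        intro y hy
        rcases Finset.mem_insert.1 hy with rfl | hy
        · exact hfE
        · exact hE'E (hsd _ _ hJ'E' hP hy)) (by
        rw [h1]
        have e1 := fun2_self (Pi.single v 1 : V → ZMod 2)
        have e2 := fun2_self (Pi.single w 1 : V → ZMod 2)
        have e3 := fun2_self (Pi.single u 1 : V → ZMod 2)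
        linear_combination e1 + e2 + e3)
    rw [Finset.card_insert_of_notMem hfn] at h2
    have q2 := card_symmDiff_wt J' P
    show (J.card : ℤ) ≤ J'.card + (∑ e ∈ P, _) + 1
    omega
  have claimK : ∀ K ⊆ E', (∀ y, y ≠ v → ¬ N y → bd a b K y = bd a b J y) →
      J.card ≤ K.card + 1 := by
    intro K hK hKb
    set D := symmDiff J' K with hD
    have hDE : D ⊆ E' := hsd _ _ hJ'E' hK
    have hKv : bd a b K v = 0 := by
      apply Finset.sum_eq_zero
      intro e he
      have := (Finset.mem_filter.1 (hK he)).2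
      simp [this]
    have hDb : ∀ y, y ≠ u → bd a b D y = 1 → N y := by
      intro y hyu hy
      by_contra hN
      by_cases hyv : y = v
      · subst hyv
        rw [hD, bd_symmDiff, Pi.add_apply, hKv, hJ'v0] at hy
        exact absurd hy (by decide)
      · rw [hD, bd_symmDiff, Pi.add_apply, hKb y hyv hN, hJ'bd] at hy
        simp [hyu, hyv, z2_add_self] at hy
    have hcD := card_symmDiff_wt J' D
    have hJD : symmDiff J' D = K := by rw [hD, symmDiff_symmDiff_cancel_left]
    rw [hJD] at hcD
    change (K.card : ℤ) = J'.card + wt D at hcD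
    rcases z2_cases (bd a b D u) with hu | hu
    · -- then u is in N
      have huN : N u := by
        by_contra hN
        rw [hD, bd_symmDiff, Pi.add_apply, hKb u huv hN, hJ'bd] at hu
        simp [huv] at hu
        have h3 := z2_add_self (bd a b J u)
        have : (1 : ZMod 2) = 0 := by linear_combination hu - h3
        exact absurd this (by decide)
      have h1 := claimP ∅ (by simp) u huN (by rw [bd_empty, fun2_self])
      have h2 := claimA _ D le_rfl hDE (by
        intro y hy
        by_cases hyu : y = u
        · rw [hyu]; exact huN
        · exact hDb y hyu hy)
      simp [wt] at h1
      omega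
    · obtain ⟨P, hPD, w, hwu, hw, hPb⟩ := bd_subpath a b _ D u le_rfl hu
      have hwN := hDb w hwu hw
      have h1 := claimP P (hPD.trans hDE) w hwN hPb
      have h2 := claimA _ (D \ P) le_rfl (Finset.sdiff_subset.trans hDE) (by
        intro y hy
        rw [bd_sdiff a b hPD, hPb] at hy
        by_cases hyw : y = w
        · rw [hyw]; exact hwN
        by_cases hyu : y = u
        · subst hyu
          simp [hwu.symm, hu] at hy
        · apply hDb y hyu
          simpa [hyw, hyu] using hy)
      have q4 : wt D = wt (D \ P) + wt P := (Finset.sum_sdiff hPD).symm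
      omega
  -- contraction
  let π : V → V := fun y => if y = v ∨ N y then v else y
  have hπv : π v = v := by simp [π]
  have hπN : ∀ y, N y → π y = v := by intro y hy; simp [π, hy]
  have hπo : ∀ y, y ≠ v → ¬ N y → π y = y := by intro y h1 h2; simp [π, h1, h2]
  have hπy : ∀ y z, y ≠ v → ¬ N y → (π z = y ↔ z = y) := by
    intro y z h1 h2
    constructor
    · intro h
      by_cases hz : z = v ∨ N z
      · simp only [π, hz, if_true] at h; exact absurd h.symm h1
      · simpa only [π, hz, if_false] using h
    · rintro rfl; exact hπo _ h1 h2
  have hπe : ∀ e ∈ E, e ∉ E' → π (a e) = v ∧ π (b e) = v := by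
    intro e he he'
    have : a e = v ∨ b e = v := by
      by_contra hcon
      push Not at hcon
      exact he' (Finset.mem_filter.2 ⟨he, hcon⟩)
    rcases this with h | h
    · exact ⟨by rw [h, hπv], hπN _ ⟨e, he, Or.inl ⟨h, rfl⟩⟩⟩
    · exact ⟨hπN _ ⟨e, he, Or.inr ⟨h, rfl⟩⟩, by rw [h, hπv]⟩
  let a' : ε → V := fun e => π (a e)
  let b' : ε → V := fun e => π (b e)
  set J1 := J.filter (fun e => e ∈ E') with hJ1
  have hJ1bd : bd a' b' J1 = bd a' b' J := by
    ext y
    simp only [bd, hJ1]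
    apply Finset.sum_filter_of_ne
    intro e he hne
    by_contra h
    obtain ⟨h1, h2⟩ := hπe e (hJE he) h
    apply hne
    simp only [a', b', h1, h2]
    exact z2_add_self _
  have hbdo : ∀ F : Finset ε, ∀ y, y ≠ v → ¬ N y → bd a' b' F y = bd a b F y := by
    intro F y h1 h2
    simp only [bd, a', b', hπy y _ h1 h2]
  have hcardE' : E'.card < E.card := by
    apply Finset.card_lt_card
    refine ⟨hE'E, fun hsub => ?_⟩
    have : bd a b J v = 0 := by
      apply Finset.sum_eq_zero
      intro e he
      have := (Finset.mem_filter.1 (hsub (hJE he))).2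
      simp [this]
    rw [hTv] at this
    exact absurd this (by decide)
  obtain ⟨K, hKE', hKbd, hKx⟩ := ih E' a' b' (fun y => if y = v then c v + 1 else c y) x J1
    (by omega) (fun e he => (Finset.mem_filter.1 he).2)
    (by
      have key : ∀ z, z ≠ v → (if π z = v then c v + 1 else c (π z)) = c z := by
        intro z hz
        by_cases hN : N z
        · rw [hπN z hN, if_pos rfl, hNc z hN]
        · rw [hπo z hz hN, if_neg hz]
      intro e he
      have h1 := (Finset.mem_filter.1 he).2
      simp only [a', b']
      rw [key _ h1.1, key _ h1.2]
      exact hc e (hE'E he))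
    (fun e he => hx e (hE'E he))
    (by
      intro S hS
      have h1 := hcut (Finset.univ.filter (fun z => π z ∈ S)) (by
        rw [← hS, hJ1bd, bd_sum, bd_sum]
        simp [a', b'])
      refine h1.trans (le_of_eq ?_)
      apply Finset.sum_congr _ (fun _ _ => rfl)
      ext e
      simp only [Finset.mem_filter, Finset.mem_univ, true_and, a', b']
      constructor
      · rintro ⟨h2, h3⟩
        refine ⟨?_, h3⟩
        by_contra h4
        obtain ⟨h5, h6⟩ := hπe e h2 h4
        rw [h5, h6] at h3
        tauto
      · rintro ⟨h2, h3⟩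
        exact ⟨hE'E h2, h3⟩)
  have hfin := claimK K hKE' (by
    intro y h1 h2
    rw [← hbdo K y h1 h2, hKbd, hJ1bd, hbdo J y h1 h2])
  have hv1 := hcut {v} (by simpa using hTv)
  have hsplit : ∑ e ∈ E, x e = ∑ e ∈ E', x e + ∑ e ∈ E \ E', x e := by
    rw [add_comm, Finset.sum_sdiff hE'E]
  have hle : ∑ e ∈ E with ¬ (a e ∈ ({v} : Finset V) ↔ b e ∈ ({v} : Finset V)), x e
      ≤ ∑ e ∈ E \ E', x e := by
    apply Finset.sum_le_sum_of_subset_of_nonneg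
    · intro e he
      simp only [Finset.mem_filter, Finset.mem_singleton] at he
      simp only [Finset.mem_sdiff, hE', Finset.mem_filter]
      tauto
    · intro e he _
      exact hx e (Finset.mem_sdiff.1 he).1
  have hfin' : (J.card : ℝ) ≤ K.card + 1 := by exact_mod_cast hfin
  linarith

/-- general graphs by subdivision -/
lemma tjoin_gen [Fintype V] [Fintype ε] (a b : ε → V) (x : ε → ℝ) (J0 : Finset ε)
    (hx : ∀ e, 0 ≤ x e)
    (hcut : ∀ S : Finset V, ∑ v ∈ S, bd a b J0 v = 1 →
      2 ≤ ∑ e with ¬ (a e ∈ S ↔ b e ∈ S), x e) :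
    ∃ J : Finset ε, bd a b J = bd a b J0 ∧ (J.card : ℝ) ≤ (∑ e, x e) / 2 := by
  let A : ε × Bool → V ⊕ ε := fun p => Sum.inr p.1
  let B : ε × Bool → V ⊕ ε := fun p => Sum.inl (if p.2 then b p.1 else a p.1)
  have hinl : ∀ (F : Finset ε) (v : V), bd A B (F ×ˢ Finset.univ) (Sum.inl v) = bd a b F v := by
    intro F v
    simp only [bd, Finset.sum_product, A, B]
    apply Finset.sum_congr rfl
    intro e _
    rw [Fintype.sum_bool]
    simp
    ring
  have hinr : ∀ (F : Finset (ε × Bool)) (e : ε), bd A B F (Sum.inr e)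
      = (if (e, true) ∈ F then 1 else 0) + (if (e, false) ∈ F then 1 else 0) := by
    intro F e
    simp only [bd, A, B]
    simp only [reduceCtorEq, if_false, add_zero, Sum.inr.injEq]
    rw [← Finset.sum_filter]
    have : F.filter (fun p => p.1 = e) = (({(e, true), (e, false)} : Finset (ε × Bool))).filter
        (fun p => p ∈ F) := by
      ext ⟨p, i⟩
      cases i <;> simp <;> grind
    rw [this, Finset.sum_filter, Finset.sum_pair (by simp)]
  obtain ⟨J, -, hJb, hJc⟩ := tjoin_bip (Finset.univ : Finset (ε × Bool)).card Finset.univ A B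
    (Sum.elim (fun _ => 0) (fun _ => 1)) (fun p => x p.1 / 2) (J0 ×ˢ Finset.univ) le_rfl
    (Finset.subset_univ _) (by intro e _; simp [A, B])
    (by intro e _; have := hx e.1; positivity)
    (by
      intro S hS
      have hS' : ∑ v ∈ (Finset.univ.filter (fun v => Sum.inl v ∈ S)), bd a b J0 v = 1 := by
        rw [← hS, bd_sum, bd_sum, Finset.sum_product]
        apply Finset.sum_congr rfl
        intro e _
        simp [A, B]
        have := z2_add_self (if Sum.inr e ∈ S then 1 else 0)
        linear_combination -this
      have h1 := hcut _ hS'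
      rw [Finset.sum_filter] at h1
      have h2 : ∑ e, (if ¬ (a e ∈ (Finset.univ.filter (fun v => Sum.inl v ∈ S)) ↔
            b e ∈ (Finset.univ.filter (fun v => Sum.inl v ∈ S))) then x e else 0)
          ≤ 2 * ∑ p : ε × Bool with ¬ (A p ∈ S ↔ B p ∈ S), x p.1 / 2 := by
        rw [Finset.sum_filter, Fintype.sum_prod_type, Finset.mul_sum]
        apply Finset.sum_le_sum
        intro e _
        have := hx e
        simp [A, B]
        by_cases c1 : Sum.inl (a e) ∈ S <;> by_cases c2 : Sum.inl (b e) ∈ S <;>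
          by_cases c3 : Sum.inr e ∈ S <;> simp [c1, c2, c3] <;> linarith
      linarith)
  have hboth : ∀ e, (e, true) ∈ J ↔ (e, false) ∈ J := by
    intro e
    have h1 := congrFun hJb (Sum.inr e)
    rw [hinr, hinr] at h1
    simp only [Finset.mem_product, Finset.mem_univ, and_true, z2_add_self] at h1
    by_cases c1 : (e, true) ∈ J <;> by_cases c2 : (e, false) ∈ J <;> simp [c1, c2] at h1 ⊢
  set K : Finset ε := Finset.univ.filter (fun e => (e, true) ∈ J) with hK
  have hJK : J = K ×ˢ Finset.univ := by
    ext ⟨e, i⟩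
    cases i <;> simp [hK, hboth]
  refine ⟨K, ?_, ?_⟩
  · ext v
    rw [← hinl, ← hJK, hJb, hinl]
  · rw [hJK, Finset.card_product, Fintype.sum_prod_type] at hJc
    simp at hJc
    rw [← Finset.mul_sum, ← Finset.sum_div] at hJc
    linarith

end
end HKP

namespace HKP

section
variable {V ε : Type*} [DecidableEq V] [DecidableEq ε]

/-- one step along an edge of `F` -/
def Stp (a b : ε → V) (F : Finset ε) (p q : V) : Prop :=
  ∃ e ∈ F, (a e = p ∧ b e = q) ∨ (b e = p ∧ a e = q)

lemma Stp.symm {a b : ε → V} {F : Finset ε} {p q : V} (h : Stp a b F p q) : Stp a b F q p := by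
  obtain ⟨e, he, h⟩ := h
  exact ⟨e, he, by tauto⟩

lemma rtg_symm {a b : ε → V} {F : Finset ε} {p q : V}
    (h : Relation.ReflTransGen (Stp a b F) p q) : Relation.ReflTransGen (Stp a b F) q p := by
  induction h with
  | refl => exact .refl
  | tail _ h2 ih => exact ih.head h2.symm

lemma bd_sum_cross [Fintype V] (a b : ε → V) (F : Finset ε) (S : Finset V) :
    ∑ v ∈ S, bd a b F v = ((F.filter (fun e => ¬ (a e ∈ S ↔ b e ∈ S))).card : ZMod 2) := by
  rw [bd_sum, Finset.card_filter]
  push_cast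
  apply Finset.sum_congr rfl
  intro e _
  by_cases h1 : a e ∈ S <;> by_cases h2 : b e ∈ S <;> simp [h1, h2]
  decide

lemma euler [Fintype V] (G : SimpleGraph V) (a b : ε → V) : ∀ (n : ℕ) (F : Finset ε), F.card ≤ n →
    (∀ e ∈ F, G.Adj (a e) (b e)) → ∀ s t, bd a b F = Pi.single s 1 + Pi.single t 1 →
    ∃ w : G.Walk s t, w.length ≤ F.card ∧
      ∀ y, Relation.ReflTransGen (Stp a b F) s y → y ∈ w.support := by
  classical
  intro n
  induction n using Nat.strong_induction_on with
  | _ n ih =>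
  intro F hFn hadj s t hbd
  by_cases hs : ∃ e ∈ F, a e = s ∨ b e = s
  swap
  · push Not at hs
    have h0 : bd a b F s = 0 := by
      apply Finset.sum_eq_zero
      intro e he
      simp [hs e he]
    have hst : s = t := by
      by_contra hne
      rw [hbd] at h0
      simp [hne] at h0
    subst hst
    refine ⟨.nil, by simp, ?_⟩
    intro y hy
    rcases Relation.ReflTransGen.cases_head hy with h | ⟨z, ⟨e, he, hz⟩, -⟩
    · simp [h]
    · have := hs e he
      tauto
  obtain ⟨e, heF, hend⟩ := hs
  obtain ⟨v, hv, hev⟩ := edge_end a b hend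
  have hsv : G.Adj s v := by
    have := hadj e heF
    rcases hev with ⟨h1, h2⟩ | ⟨h1, h2⟩
    · rwa [h1, h2] at this
    · rw [h1, h2] at this; exact this.symm
  set F' := F.erase e with hF'
  have hcard : F'.card + 1 = F.card := Finset.card_erase_add_one heF
  have hF'bd : bd a b F' = Pi.single v 1 + Pi.single t 1 := by
    rw [hF', bd_erase a b heF, hbd, hv]
    have := fun2_self (Pi.single s 1 : V → ZMod 2)
    linear_combination this
  have hadj' : ∀ f ∈ F', G.Adj (a f) (b f) := fun f hf => hadj f (Finset.mem_of_mem_erase hf)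
  by_cases hvK : Relation.ReflTransGen (Stp a b F') s v
  · obtain ⟨w, hwl, hw⟩ := ih F'.card (by omega) F' le_rfl hadj' v t hF'bd
    refine ⟨.cons hsv w, by simp; omega, ?_⟩
    intro y hy
    rw [SimpleGraph.Walk.support_cons]
    apply List.mem_cons_of_mem
    apply hw
    induction hy with
    | refl => exact rtg_symm hvK
    | @tail y z _ h2 ihy =>
      obtain ⟨f, hf, hfe⟩ := h2
      by_cases hfe' : f = e
      · subst hfe'
        have : z = s ∨ z = v := by
          rcases hev with ⟨h1, h2⟩ | ⟨h1, h2⟩ <;> rcases hfe with ⟨h3, h4⟩ | ⟨h3, h4⟩ <;>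
            rw [← h4] <;> tauto
        rcases this with rfl | rfl
        · exact rtg_symm hvK
        · exact .refl
      · exact ihy.tail ⟨f, Finset.mem_erase.2 ⟨hfe', hf⟩, hfe⟩
  · set K : Finset V := Finset.univ.filter (fun y => Relation.ReflTransGen (Stp a b F') s y) with hK
    have hmK : ∀ y, y ∈ K ↔ Relation.ReflTransGen (Stp a b F') s y := by intro y; simp [hK]
    have hsK : s ∈ K := (hmK s).2 .refl
    have hvK' : v ∉ K := fun h => hvK ((hmK v).1 h)
    have hiff : ∀ f ∈ F', (a f ∈ K ↔ b f ∈ K) := by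
      intro f hf
      rw [hmK, hmK]
      exact ⟨fun h => h.tail ⟨f, hf, Or.inl ⟨rfl, rfl⟩⟩, fun h => h.tail ⟨f, hf, Or.inr ⟨rfl, rfl⟩⟩⟩
    set F1 := F'.filter (fun f => a f ∈ K) with hF1
    have hF1s : F1 ⊆ F' := Finset.filter_subset _ _
    have htK : t ∉ K := by
      intro htK
      have h1 := bd_sum_cross a b F' K
      rw [Finset.filter_false_of_mem (fun f hf => not_not.2 (hiff f hf)), hF'bd] at h1
      simp [Finset.sum_add_distrib, hvK', htK] at h1
    have hF1bd : bd a b F1 = 0 := by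
      ext y
      by_cases hy : y ∈ K
      · have h1 : bd a b F1 y = bd a b F' y := by
          simp only [bd, hF1]
          apply Finset.sum_filter_of_ne
          intro f hf hne
          by_contra haK
          have hbK : b f ∉ K := fun h => haK ((hiff f hf).2 h)
          apply hne
          rw [if_neg, if_neg, add_zero]
          · rintro rfl; exact hbK hy
          · rintro rfl; exact haK hy
        rw [h1, hF'bd]
        have h2 : y ≠ v := by rintro rfl; exact hvK' hy
        have h3 : y ≠ t := by rintro rfl; exact htK hy
        simp [h2, h3]
      · apply Finset.sum_eq_zero
        intro f hf
        have h1 := (Finset.mem_filter.1 hf)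
        have h2 := (hiff f h1.1).1 h1.2
        rw [if_neg, if_neg, add_zero]
        · rintro rfl; exact hy h2
        · rintro rfl; exact hy h1.2
    have hF2bd : bd a b (F' \ F1) = Pi.single v 1 + Pi.single t 1 := by
      rw [bd_sdiff a b hF1s, hF1bd, hF'bd, add_zero]
    have hc1 := Finset.card_le_card hF1s
    have hc2 : (F' \ F1).card = F'.card - F1.card := Finset.card_sdiff_of_subset hF1s
    obtain ⟨w1, hw1l, hw1⟩ := ih F1.card (by omega) F1 le_rfl
      (fun f hf => hadj' f (hF1s hf)) s s (by rw [hF1bd, fun2_self])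
    obtain ⟨w2, hw2l, hw2⟩ := ih (F' \ F1).card (by omega) (F' \ F1) le_rfl
      (fun f hf => hadj' f (Finset.sdiff_subset hf)) v t hF2bd
    refine ⟨w1.append (.cons hsv w2), by simp; omega, ?_⟩
    intro y hy
    have key : (Relation.ReflTransGen (Stp a b F1) s y ∧ y ∈ K) ∨
        (Relation.ReflTransGen (Stp a b (F' \ F1)) v y ∧ y ∉ K) := by
      induction hy with
      | refl => exact Or.inl ⟨.refl, hsK⟩
      | @tail y z _ h2 ihy =>
        obtain ⟨f, hf, hfe⟩ := h2
        by_cases hfe' : f = e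
        · subst hfe'
          have : z = s ∨ z = v := by
            rcases hev with ⟨h1, h2⟩ | ⟨h1, h2⟩ <;> rcases hfe with ⟨h3, h4⟩ | ⟨h3, h4⟩ <;>
              rw [← h4] <;> tauto
          rcases this with rfl | rfl
          · exact Or.inl ⟨.refl, hsK⟩
          · exact Or.inr ⟨.refl, hvK'⟩
        · have hf' : f ∈ F' := Finset.mem_erase.2 ⟨hfe', hf⟩
          have hi := hiff f hf'
          have hyz : y ∈ K ↔ z ∈ K := by
            rcases hfe with ⟨h1, h2⟩ | ⟨h1, h2⟩
            · rw [← h1, ← h2]; exact hi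
            · rw [← h1, ← h2]; exact hi.symm
          have haf : a f ∈ K ↔ y ∈ K := by
            rcases hfe with ⟨h1, h2⟩ | ⟨h1, h2⟩
            · rw [← h1]
            · rw [← h1]; exact hi
          rcases ihy with ⟨h1, h2⟩ | ⟨h1, h2⟩
          · exact Or.inl ⟨h1.tail ⟨f, Finset.mem_filter.2 ⟨hf', haf.2 h2⟩, hfe⟩, hyz.1 h2⟩
          · refine Or.inr ⟨h1.tail ⟨f, Finset.mem_sdiff.2 ⟨hf', ?_⟩, hfe⟩, fun h => h2 (hyz.2 h)⟩
            intro h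
            exact h2 (haf.1 (Finset.mem_filter.1 h).2)
    rw [SimpleGraph.Walk.mem_support_append_iff]
    rcases key with h | h
    · exact Or.inl (hw1 y h.1)
    · right
      rw [SimpleGraph.Walk.support_cons]
      exact List.mem_cons_of_mem _ (hw2 y h.1)

/-- growing a tree crossing each narrow set exactly once -/
lemma grow [Fintype V] (G : SimpleGraph V) (s : V) (Nw : Finset V → Prop)
    (hNs : ∀ S, Nw S → s ∈ S)
    (H : ∀ R : Finset V, s ∈ R → R ≠ Finset.univ → (∀ S, Nw S → S ⊆ R ∨ R ⊆ S) →
      ∃ u1 ∈ R, ∃ u2, u2 ∉ R ∧ G.Adj u2 u1 ∧ ∀ S, Nw S → (S ⊂ R → u1 ∉ S) ∧ (R ⊂ S → u2 ∈ S)) :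
    ∀ k : ℕ, k + 1 ≤ Fintype.card V → ∃ R : Finset V, R.card = k + 1 ∧ s ∈ R ∧
      (∀ S, Nw S → S ⊆ R ∨ R ⊆ S) ∧ ∃ p : V → V,
      (∀ v ∈ R, v ≠ s → p v ∈ R ∧ G.Adj v (p v)) ∧
      (∀ X : Set V, s ∈ X → (∀ v ∈ R, v ≠ s → p v ∈ X → v ∈ X) → ∀ v ∈ R, v ∈ X) ∧
      ∀ S, Nw S → ((R.erase s).filter (fun v => ¬ (v ∈ S ↔ p v ∈ S))).card
        = if S ⊂ R then 1 else 0 := by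
  intro k
  induction k with
  | zero =>
    intro _
    refine ⟨{s}, by simp, by simp, ?_, id, ?_, ?_, ?_⟩
    · intro S hS; right; simpa using hNs S hS
    · intro v hv hvs; simp at hv; exact absurd hv hvs
    · intro X hX _ v hv; simp at hv; rwa [hv]
    · intro S hS
      rw [if_neg]
      · simp
      · intro h
        exact h.2 (by simpa using hNs S hS)
  | succ k ih =>
    intro hk
    obtain ⟨R, hRc, hsR, hcomp, p, hp1, hp2, hp3⟩ := ih (by omega)
    have hRu : R ≠ Finset.univ := by
      rintro rfl
      rw [Finset.card_univ] at hRc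
      omega
    obtain ⟨u1, hu1, u2, hu2, hadj, hu⟩ := H R hsR hRu hcomp
    have hne : ∀ v ∈ R, v ≠ u2 := by rintro v hv rfl; exact hu2 hv
    have hu2s : u2 ≠ s := (hne s hsR).symm
    refine ⟨insert u2 R, by rw [Finset.card_insert_of_notMem hu2, hRc],
      Finset.mem_insert_of_mem hsR, ?_, Function.update p u2 u1, ?_, ?_, ?_⟩
    · intro S hS
      rcases hcomp S hS with h | h
      · exact Or.inl (h.trans (Finset.subset_insert _ _))
      · rcases eq_or_ssubset_of_subset h with h' | h'
        · left; rw [← h']; exact Finset.subset_insert _ _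
        · right
          exact Finset.insert_subset ((hu S hS).2 h') h
    · intro v hv hvs
      rcases Finset.mem_insert.1 hv with rfl | hv
      · simp [hadj, hu1]
      · rw [Function.update_of_ne (hne v hv)]
        exact ⟨Finset.mem_insert_of_mem (hp1 v hv hvs).1, (hp1 v hv hvs).2⟩
    · intro X hX hcl
      have hR : ∀ v ∈ R, v ∈ X := by
        apply hp2 X hX
        intro v hv hvs hpv
        apply hcl v (Finset.mem_insert_of_mem hv) hvs
        rwa [Function.update_of_ne (hne v hv)]
      intro v hv
      rcases Finset.mem_insert.1 hv with rfl | hv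
      · apply hcl v (Finset.mem_insert_self _ _) hu2s
        simpa using hR u1 hu1
      · exact hR v hv
    · intro S hS
      rw [Finset.erase_insert_of_ne hu2s, Finset.filter_insert]
      have hcongr : (R.erase s).filter (fun v => ¬ (v ∈ S ↔ Function.update p u2 u1 v ∈ S))
          = (R.erase s).filter (fun v => ¬ (v ∈ S ↔ p v ∈ S)) := by
        apply Finset.filter_congr
        intro v hv
        rw [Function.update_of_ne (hne v (Finset.mem_of_mem_erase hv))]
      rw [hcongr, Function.update_self]
      have hni : u2 ∉ (R.erase s).filter (fun v => ¬ (v ∈ S ↔ p v ∈ S)) := by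
        intro h
        exact hu2 (Finset.mem_of_mem_erase (Finset.mem_filter.1 h).1)
      have h3 := hp3 S hS
      rcases hcomp S hS with h | h
      · have hss : S ⊂ insert u2 R := by
          refine ⟨h.trans (Finset.subset_insert _ _), fun hsub => ?_⟩
          exact hu2 (h (hsub (Finset.mem_insert_self _ _)))
        rw [if_pos hss]
        have hu2S : u2 ∉ S := fun h' => hu2 (h h')
        rcases eq_or_ssubset_of_subset h with h' | h'
        · have hu1S : u1 ∈ S := by rw [h']; exact hu1
          rw [if_neg (by rw [h']; exact fun h => h.2 subset_rfl)] at h3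
          rw [if_pos (by tauto), Finset.card_insert_of_notMem hni, h3]
        · have hu1S : u1 ∉ S := (hu S hS).1 h'
          rw [if_pos h'] at h3
          rw [if_neg (by tauto), h3]
      · rcases eq_or_ssubset_of_subset h with h' | h'
        · have hu1S : u1 ∈ S := by rw [← h']; exact hu1
          have hu2S : u2 ∉ S := by rw [← h']; exact hu2
          rw [if_neg (by rw [h']; exact fun h => h.2 subset_rfl)] at h3
          rw [if_pos (by tauto), Finset.card_insert_of_notMem hni, h3, if_pos]
          rw [← h']
          exact Finset.ssubset_insert hu2
        · have hu1S : u1 ∈ S := h hu1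
          have hu2S : u2 ∈ S := (hu S hS).2 h'
          rw [if_neg (fun h'' => h'.2 h''.1)] at h3
          rw [if_neg (by tauto), h3, if_neg]
          intro h''
          exact h''.2 (Finset.insert_subset hu2S h)

/-- cut weight -/
noncomputable def dc [Fintype ε] (a b : ε → V) (x : ε → ℝ) (S : Finset V) : ℝ :=
  ∑ e with ¬ (a e ∈ S ↔ b e ∈ S), x e

lemma dc_uncross [Fintype V] [Fintype ε] (a b : ε → V) (x : ε → ℝ) (hx : ∀ e, 0 ≤ x e)
    (S1 S2 : Finset V) :
    dc a b x (S1 \ S2) + dc a b x (S2 \ S1) ≤ dc a b x S1 + dc a b x S2 := by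
  simp only [dc, Finset.sum_filter, ← Finset.sum_add_distrib]
  apply Finset.sum_le_sum
  intro e _
  have := hx e
  simp only [Finset.mem_sdiff]
  by_cases h1 : a e ∈ S1 <;> by_cases h2 : b e ∈ S1 <;> by_cases h3 : a e ∈ S2 <;>
    by_cases h4 : b e ∈ S2 <;> simp [h1, h2, h3, h4] <;> linarith

lemma dc_three [Fintype V] [Fintype ε] (a b : ε → V) (x : ε → ℝ) (hx : ∀ e, 0 ≤ x e)
    (A R B : Finset V) (hAR : A ⊆ R) (hRB : R ⊆ B)
    (hno : ∀ e, ¬ (a e ∈ R \ A ∧ b e ∈ B \ R) ∧ ¬ (b e ∈ R \ A ∧ a e ∈ B \ R)) :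
    dc a b x (R \ A) + dc a b x (B \ R) ≤ dc a b x A + dc a b x B := by
  simp only [dc, Finset.sum_filter, ← Finset.sum_add_distrib]
  apply Finset.sum_le_sum
  intro e _
  have hn := hno e
  have := hx e
  have i1 := @hAR (a e)
  have i2 := @hAR (b e)
  have i3 := @hRB (a e)
  have i4 := @hRB (b e)
  simp only [Finset.mem_sdiff] at hn ⊢
  by_cases h1 : a e ∈ A <;> by_cases h2 : b e ∈ A <;> by_cases h3 : a e ∈ R <;>
    by_cases h4 : b e ∈ R <;> by_cases h5 : a e ∈ B <;> by_cases h6 : b e ∈ B <;>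
    simp [h1, h2, h3, h4, h5, h6] at hn i1 i2 i3 i4 ⊢ <;> linarith

lemma dc_compl [Fintype V] [Fintype ε] (a b : ε → V) (x : ε → ℝ) (S : Finset V) :
    dc a b x Sᶜ = dc a b x S := by
  simp only [dc, Finset.mem_compl, not_iff_not]

lemma joinable [Fintype V] (G : SimpleGraph V) (hG : G.Connected) (a b : ε → V)
    (hab' : ∀ u v, G.Adj u v → ∃ e, (a e = u ∧ b e = v) ∨ (b e = u ∧ a e = v)) (u v : V) :
    ∃ J : Finset ε, bd a b J = Pi.single u 1 + Pi.single v 1 := by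
  obtain ⟨w⟩ := hG.preconnected u v
  induction w with
  | nil => exact ⟨∅, by rw [bd_empty, fun2_self]⟩
  | @cons p q r h _ ih =>
    obtain ⟨J, hJ⟩ := ih
    obtain ⟨e, he⟩ := hab' _ _ h
    refine ⟨symmDiff {e} J, ?_⟩
    have h1 : bd a b {e} = Pi.single p 1 + Pi.single q 1 := by
      rw [bd_single]
      rcases he with ⟨h1, h2⟩ | ⟨h1, h2⟩
      · rw [h1, h2]
      · rw [h1, h2, add_comm]
    rw [bd_symmDiff, h1, hJ]
    have := fun2_self (Pi.single q 1 : V → ZMod 2)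
    linear_combination this

lemma core [Fintype V] [Fintype ε] (G : SimpleGraph V) (hG : G.Connected) (a b : ε → V)
    (hab : ∀ e, G.Adj (a e) (b e))
    (hab' : ∀ u v, G.Adj u v → ∃ e, (a e = u ∧ b e = v) ∨ (b e = u ∧ a e = v))
    (s t : V) (x : ε → ℝ) (hx : ∀ e, 0 ≤ x e)
    (hf : ∀ S : Finset V, S.Nonempty → S ≠ Finset.univ →
      ((s ∈ S ↔ t ∈ S) → 2 ≤ dc a b x S) ∧ (¬ (s ∈ S ↔ t ∈ S) → 1 ≤ dc a b x S)) :
    ∃ w : G.Walk s t, (∀ u : V, u ∈ w.support) ∧ (w.length : ℝ) ≤ 3 / 2 * ∑ e, x e := by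
  classical
  let Nw : Finset V → Prop := fun S => s ∈ S ∧ t ∉ S ∧ dc a b x S < 2
  have hd0 : dc a b x ∅ = 0 := by simp [dc]
  have hd1 : dc a b x Finset.univ = 0 := by simp [dc]
  have hpos : 0 < Fintype.card V := Fintype.card_pos_iff.2 ⟨s⟩
  have hchain : ∀ S1 S2, Nw S1 → Nw S2 → S1 ⊆ S2 ∨ S2 ⊆ S1 := by
    rintro S1 S2 ⟨h1, h2, h3⟩ ⟨h4, h5, h6⟩
    by_contra hcon
    push Not at hcon
    have n1 : (S1 \ S2).Nonempty := Finset.sdiff_nonempty.2 hcon.1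
    have n2 : (S2 \ S1).Nonempty := Finset.sdiff_nonempty.2 hcon.2
    have g1 := (hf (S1 \ S2) n1 (by
      intro h; have := Finset.mem_univ s; rw [← h] at this; simp [h4] at this)).1 (by
      simp [h4, h2])
    have g2 := (hf (S2 \ S1) n2 (by
      intro h; have := Finset.mem_univ s; rw [← h] at this; simp [h1] at this)).1 (by
      simp [h1, h5])
    have := dc_uncross a b x hx S1 S2
    linarith
  have H : ∀ R : Finset V, s ∈ R → R ≠ Finset.univ → (∀ S, Nw S → S ⊆ R ∨ R ⊆ S) →
      ∃ u1 ∈ R, ∃ u2, u2 ∉ R ∧ G.Adj u2 u1 ∧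
        ∀ S, Nw S → (S ⊂ R → u1 ∉ S) ∧ (R ⊂ S → u2 ∈ S) := by
    intro R hsR hRu hcomp
    have hA : ∃ A, A ⊂ R ∧ (∀ S, Nw S → S ⊂ R → S ⊆ A) ∧ (A = ∅ ∨ Nw A) := by
      by_cases hex : ∃ S, Nw S ∧ S ⊂ R
      · obtain ⟨S0, hS0⟩ := hex
        obtain ⟨A, hA, hAm⟩ := Finset.exists_max_image
          (Finset.univ.filter (fun S => Nw S ∧ S ⊂ R)) Finset.card
          ⟨S0, by simp only [Finset.mem_filter, Finset.mem_univ, true_and]; exact hS0⟩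
        simp only [Finset.mem_filter, Finset.mem_univ, true_and] at hA hAm
        refine ⟨A, hA.2, ?_, Or.inr hA.1⟩
        intro S hS hSR
        rcases hchain S A hS hA.1 with h | h
        · exact h
        · exact (Finset.eq_of_subset_of_card_le h (hAm S ⟨hS, hSR⟩)).symm.subset
      · refine ⟨∅, ?_, ?_, Or.inl rfl⟩
        · exact Finset.empty_ssubset.2 ⟨s, hsR⟩
        · intro S hS hSR; exact absurd ⟨S, hS, hSR⟩ hex
    have hB : ∃ B, R ⊂ B ∧ (∀ S, Nw S → R ⊂ S → B ⊆ S) ∧ (B = Finset.univ ∨ Nw B) := by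
      by_cases hex : ∃ S, Nw S ∧ R ⊂ S
      · obtain ⟨S0, hS0⟩ := hex
        obtain ⟨B, hB, hBm⟩ := Finset.exists_min_image
          (Finset.univ.filter (fun S => Nw S ∧ R ⊂ S)) Finset.card
          ⟨S0, by simp only [Finset.mem_filter, Finset.mem_univ, true_and]; exact hS0⟩
        simp only [Finset.mem_filter, Finset.mem_univ, true_and] at hB hBm
        refine ⟨B, hB.2, ?_, Or.inr hB.1⟩
        intro S hS hSR
        rcases hchain S B hS hB.1 with h | h
        · exact (Finset.eq_of_subset_of_card_le h (hBm S ⟨hS, hSR⟩)).symm.subset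
        · exact h
      · refine ⟨Finset.univ, ?_, ?_, Or.inl rfl⟩
        · exact Finset.ssubset_univ_iff.2 hRu
        · intro S hS hSR; exact absurd ⟨S, hS, hSR⟩ hex
    obtain ⟨A, hAR, hAS, hA⟩ := hA
    obtain ⟨B, hRB, hBS, hB⟩ := hB
    have hedge : ∃ u1 ∈ R \ A, ∃ u2 ∈ B \ R, G.Adj u2 u1 := by
      by_contra hcon
      push Not at hcon
      have h3 := dc_three a b x hx A R B hAR.1 hRB.1 (by
        intro e
        exact ⟨fun h => hcon _ h.1 _ h.2 (hab e).symm, fun h => hcon _ h.1 _ h.2 (hab e)⟩)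
      have n1 : (R \ A).Nonempty := Finset.sdiff_nonempty.2 hAR.2
      have n2 : (B \ R).Nonempty := Finset.sdiff_nonempty.2 hRB.2
      have m1 : R \ A ≠ Finset.univ := by
        intro h
        obtain ⟨y, hy⟩ := n2
        have : y ∈ R \ A := by rw [h]; exact Finset.mem_univ y
        exact (Finset.mem_sdiff.1 hy).2 (Finset.mem_sdiff.1 this).1
      have m2 : B \ R ≠ Finset.univ := by
        intro h
        have : s ∈ B \ R := by rw [h]; exact Finset.mem_univ s
        exact (Finset.mem_sdiff.1 this).2 hsR
      have f1 := hf _ n1 m1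
      have f2 := hf _ n2 m2
      have f1' : 1 ≤ dc a b x (R \ A) := by
        by_cases h : s ∈ R \ A ↔ t ∈ R \ A
        · linarith [f1.1 h]
        · exact f1.2 h
      have f2' : 1 ≤ dc a b x (B \ R) := by
        by_cases h : s ∈ B \ R ↔ t ∈ B \ R
        · linarith [f2.1 h]
        · exact f2.2 h
      rcases hA with rfl | ⟨a1, a2, a3⟩ <;> rcases hB with rfl | ⟨b1, b2, b3⟩
      · linarith
      · have := f2.1 (by simp [hsR, b2])
        linarith
      · by_cases htR : t ∈ R
        · have := f2.1 (by simp [hsR, htR])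
          linarith
        · have := f1.1 (by simp [a1, htR])
          linarith
      · have htR : t ∉ R := fun h => b2 (hRB.1 h)
        have e1 := f1.1 (by simp [a1, htR])
        have e2 := f2.1 (by simp [hsR, b2])
        linarith
    obtain ⟨u1, hu1, u2, hu2, hadj⟩ := hedge
    rw [Finset.mem_sdiff] at hu1 hu2
    refine ⟨u1, hu1.1, u2, hu2.2, hadj, ?_⟩
    intro S hS
    exact ⟨fun h h' => hu1.2 (hAS S hS h h'), fun h => hBS S hS h hu2.1⟩
  obtain ⟨R, hRc, -, -, p, hp1, hp2, hp3⟩ := grow G s Nw (fun S hS => hS.1) H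
    (Fintype.card V - 1) (by omega)
  have hRu : R = Finset.univ := by
    rw [← Finset.card_eq_iff_eq_univ]; omega
  subst hRu
  set Ft : Finset V := Finset.univ.erase s with hFt
  have hcross : ∀ S, Nw S → ∑ v ∈ S, bd id p Ft v = 1 := by
    intro S hS
    have h1 := hp3 S hS
    rw [if_pos (Finset.ssubset_univ_iff.2 (by rintro rfl; exact hS.2.1 (Finset.mem_univ _)))] at h1
    rw [bd_sum_cross]
    simp only [id]
    rw [h1]
    simp
  -- existence of a T-join
  have hex : ∃ J0 : Finset ε, bd a b J0 = bd id p Ft + (Pi.single s 1 + Pi.single t 1) := by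
    have hex1 : ∀ F : Finset V, ∃ J : Finset ε, bd a b J = bd id p F := by
      intro F
      induction F using Finset.induction_on with
      | empty => exact ⟨∅, by rw [bd_empty, bd_empty]⟩
      | insert v F hv ih =>
        obtain ⟨J, hJ⟩ := ih
        obtain ⟨J', hJ'⟩ := joinable G hG a b hab' v (p v)
        refine ⟨symmDiff J J', ?_⟩
        rw [bd_symmDiff, bd_insert _ _ hv, hJ, hJ']
        rfl
    obtain ⟨J, hJ⟩ := hex1 Ft
    obtain ⟨J', hJ'⟩ := joinable G hG a b hab' s t
    exact ⟨symmDiff J J', by rw [bd_symmDiff, hJ, hJ']⟩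
  obtain ⟨J0, hJ0⟩ := hex
  have hst : ∀ S : Finset V, ∑ v ∈ S, (Pi.single s 1 + Pi.single t 1 : V → ZMod 2) v
      = (if s ∈ S then 1 else 0) + (if t ∈ S then 1 else 0) := by
    intro S
    simp [Finset.sum_add_distrib]
  obtain ⟨J, hJb, hJc⟩ := tjoin_gen a b x J0 hx (by
    intro S hS
    change 2 ≤ dc a b x S
    have hne : S.Nonempty := by
      rw [Finset.nonempty_iff_ne_empty]; rintro rfl; simp at hS
    have hnu : S ≠ Finset.univ := by
      rintro rfl
      rw [bd_sum_cross] at hS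
      simp at hS
    by_cases hc : s ∈ S ↔ t ∈ S
    · exact (hf S hne hnu).1 hc
    · by_contra hlt
      push Not at hlt
      have hF : ∑ v ∈ S, bd id p Ft v = 1 := by
        by_cases hs : s ∈ S
        · exact hcross S ⟨hs, by tauto, hlt⟩
        · have h1 := hcross Sᶜ ⟨by simpa using hs, by simp; tauto, by rw [dc_compl]; exact hlt⟩
          rw [bd_sum_cross] at h1 ⊢
          simpa only [Finset.mem_compl, not_iff_not] using h1
      rw [hJ0] at hS
      simp only [Pi.add_apply (bd id p Ft)] at hS
      rw [Finset.sum_add_distrib, hst, hF] at hS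
      by_cases hs : s ∈ S
      · have ht : t ∉ S := by tauto
        simp [hs, ht] at hS
      · have ht : t ∈ S := by tauto
        simp [hs, ht] at hS)
  -- combine
  let A : V ⊕ ε → V := Sum.elim id a
  let B : V ⊕ ε → V := Sum.elim p b
  have hcomb : bd A B (Ft.disjSum J) = Pi.single s 1 + Pi.single t 1 := by
    have : bd A B (Ft.disjSum J) = bd id p Ft + bd a b J := by
      ext v
      simp only [bd, Finset.sum_disjSum, A, B, Sum.elim_inl, Sum.elim_inr, Pi.add_apply]
      rfl
    rw [this, hJb, hJ0, ← add_assoc, fun2_self, zero_add]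
  obtain ⟨w, hwl, hw⟩ := euler G A B _ (Ft.disjSum J) le_rfl (by
    intro e he
    rcases e with v | e
    · simp only [Finset.inl_mem_disjSum] at he
      exact (hp1 v (Finset.mem_univ v) (Finset.ne_of_mem_erase he)).2
    · exact hab e) s t hcomb
  refine ⟨w, ?_, ?_⟩
  · intro u
    apply hw
    refine hp2 {y | Relation.ReflTransGen (Stp A B (Ft.disjSum J)) s y} .refl ?_ u
      (Finset.mem_univ u)
    intro v _ hvs hpv
    refine Relation.ReflTransGen.tail hpv ⟨Sum.inl v, ?_, Or.inr ⟨rfl, rfl⟩⟩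
    simp [hFt, hvs]
  · rw [Finset.card_disjSum] at hwl
    have hFc : Ft.card + 1 = Fintype.card V := by
      rw [hFt, Finset.card_erase_add_one (Finset.mem_univ s), Finset.card_univ]
    have hbound : (Ft.card : ℝ) ≤ ∑ e, x e := by
      by_cases h1 : Fintype.card V = 1
      · have : Ft.card = 0 := by omega
        rw [this]
        simpa using Finset.sum_nonneg (fun e _ => hx e)
      · have hdv : ∀ v : V, (2 : ℝ) - (if v = s then 1 else 0) - (if v = t then 1 else 0)
            ≤ dc a b x {v} := by
          intro v
          have := hf {v} (by simp) (by
            intro h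
            have := congrArg Finset.card h
            rw [Finset.card_univ] at this
            simp at this
            omega)
          simp only [Finset.mem_singleton] at this
          by_cases hs : v = s <;> by_cases ht : v = t <;>
            simp [hs, ht, eq_comm] at this ⊢ <;> grind
        have hsum : ∑ v, dc a b x {v} = 2 * ∑ e, x e := by
          simp only [dc, Finset.sum_filter]
          rw [Finset.sum_comm, Finset.mul_sum]
          apply Finset.sum_congr rfl
          intro e _
          have hne := (hab e).ne
          have : ∀ v, (if ¬ (a e ∈ ({v} : Finset V) ↔ b e ∈ ({v} : Finset V)) then x e else 0)
              = (if a e = v then x e else 0) + (if b e = v then x e else 0) := by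
            intro v
            simp only [Finset.mem_singleton]
            by_cases c1 : a e = v <;> by_cases c2 : b e = v <;> simp [c1, c2]
            exact absurd (c1.trans c2.symm) hne
          simp only [this, Finset.sum_add_distrib]
          simp
          ring
        have := Finset.sum_le_sum (fun v (_ : v ∈ Finset.univ) => hdv v)
        rw [hsum] at this
        simp [Finset.sum_sub_distrib] at this
        have h5 : (Fintype.card V : ℝ) = Ft.card + 1 := by exact_mod_cast hFc.symm
        rw [h5] at this
        linarith
    have h6 : (w.length : ℝ) ≤ Ft.card + J.card := by exact_mod_cast hwl
    linarith

end
end HKP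

theorem hkValue_eq {V : Type*} [Fintype V] (G : SimpleGraph V) [Fintype G.edgeSet]
    (x : Sym2 V → ℝ) : hkValue G x = ∑ e : G.edgeSet, x e := by
  rw [hkValue, ← finsum_set_coe_eq_finsum_mem, finsum_eq_sum_of_fintype]

theorem hkCut_eq {V : Type*} [Fintype V] [DecidableEq V] (G : SimpleGraph V) [Fintype G.edgeSet]
    (x : Sym2 V → ℝ) (S : Finset V) : hkCut G x (S : Set V) =
      HKP.dc (fun e : G.edgeSet => (Quot.out e.1).1) (fun e : G.edgeSet => (Quot.out e.1).2)
        (fun e => x e) S := by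
  classical
  have h1 : hkCut G x (S : Set V) = hkValue G
      (fun e => if ∃ a b, e = s(a, b) ∧ a ∈ S ∧ b ∉ S then x e else 0) := by
    rw [hkCut, hkValue, finsum_mem_def, finsum_mem_def]
    congr 1
    ext e
    by_cases c1 : e ∈ G.edgeSet <;> by_cases c2 : ∃ a b, e = s(a, b) ∧ a ∈ S ∧ b ∉ S <;>
      simp [Set.indicator, c1, c2]
  rw [h1, hkValue_eq, HKP.dc, Finset.sum_filter]
  apply Finset.sum_congr rfl
  rintro ⟨e, he⟩ _
  have hq : s((Quot.out e).1, (Quot.out e).2) = e := Quot.out_eq e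
  have : (∃ a b, e = s(a, b) ∧ a ∈ S ∧ b ∉ S) ↔
      ¬ ((Quot.out e).1 ∈ S ↔ (Quot.out e).2 ∈ S) := by
    constructor
    · rintro ⟨a, b, h, ha, hb⟩
      rw [← hq, Sym2.eq_iff] at h
      rcases h with ⟨h1, h2⟩ | ⟨h1, h2⟩ <;> rw [h1, h2] <;> tauto
    · intro h
      by_cases h1 : (Quot.out e).1 ∈ S
      · exact ⟨_, _, hq.symm, h1, by tauto⟩
      · exact ⟨(Quot.out e).2, (Quot.out e).1, by rw [Sym2.eq_swap, hq], by tauto, h1⟩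
  simp only [this]

theorem hk_feasible_two {V : Type*} [Fintype V] (G : SimpleGraph V) (hG : G.Connected) (s t : V) :
    HKPathFeasible G s t (fun _ => 2) := by
  classical
  refine ⟨fun _ => by norm_num, fun S hS hSu => ?_⟩
  have key : 2 ≤ hkCut G (fun _ => 2) S := by
    obtain ⟨u, hu⟩ := hS
    obtain ⟨v, hv⟩ := (Set.ne_univ_iff_exists_notMem S).1 hSu
    obtain ⟨w⟩ := hG.preconnected u v
    obtain ⟨d, -, hd1, hd2⟩ := w.exists_boundary_dart S hu hv
    rw [hkCut]
    have hfin : {e ∈ G.edgeSet | ∃ a b, e = s(a, b) ∧ a ∈ S ∧ b ∉ S}.Finite := Set.toFinite _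
    rw [finsum_mem_eq_finite_toFinset_sum _ hfin]
    have hm : s(d.fst, d.snd) ∈ hfin.toFinset := by
      rw [Set.Finite.mem_toFinset]
      exact ⟨d.adj, _, _, rfl, hd1, hd2⟩
    exact Finset.single_le_sum (f := fun _ : Sym2 V => (2 : ℝ)) (fun _ _ => by norm_num) hm
  exact ⟨fun _ => key, fun _ => by linarith⟩

/-- For every `ε > 0` there is an `N` such that every connected
simple graph on at least `N` vertices admits, for all vertices `s, t`, a spanning
walk from `s` to `t` of length at most `(3 − √2 + ε) · OLP(G, s, t)`. -/
theorem spanning_path_walk_le_heldKarpPath :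
    ∀ ε : ℝ, 0 < ε → ∃ N : ℕ,
      ∀ (V : Type) [Fintype V] (G : SimpleGraph V),
        N ≤ Fintype.card V → G.Connected → ∀ s t : V,
          ∃ w : G.Walk s t, (∀ u : V, u ∈ w.support) ∧
            (w.length : ℝ) ≤ (3 - Real.sqrt 2 + ε) * OLPpath G s t := by
  intro ε hε
  refine ⟨0, ?_⟩
  intro V _ G _ hG s t
  classical
  have main : ∀ x, HKPathFeasible G s t x →
      ∃ w : G.Walk s t, (∀ u : V, u ∈ w.support) ∧ (w.length : ℝ) ≤ 3 / 2 * hkValue G x := by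
    intro x hx
    rw [hkValue_eq]
    apply HKP.core G hG (fun e : G.edgeSet => (Quot.out e.1).1)
      (fun e : G.edgeSet => (Quot.out e.1).2) _ _ s t (fun e => x e) (fun e => hx.1 e)
    · intro S hS hSu
      have := hx.2 (S : Set V) (by simpa using hS) (by simpa using hSu)
      rw [hkCut_eq] at this
      simpa using this
    · rintro ⟨e, he⟩
      have hq : s((Quot.out e).1, (Quot.out e).2) = e := Quot.out_eq e
      rw [← hq] at he
      exact he
    · intro u v huv
      refine ⟨⟨s(u, v), huv⟩, ?_⟩
      have hq : s((Quot.out s(u, v)).1, (Quot.out s(u, v)).2) = s(u, v) := Quot.out_eq _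
      rw [Sym2.eq_iff] at hq
      tauto
  -- shortest spanning walk
  have hex : ∃ n : ℕ, ∃ w : G.Walk s t, (∀ u : V, u ∈ w.support) ∧ w.length = n := by
    obtain ⟨w, hw, -⟩ := main _ (hk_feasible_two G hG s t)
    exact ⟨_, w, hw, rfl⟩
  obtain ⟨w, hw, hwl⟩ := Nat.find_spec hex
  refine ⟨w, hw, ?_⟩
  have hle : 2 / 3 * (w.length : ℝ) ≤ OLPpath G s t := by
    apply le_csInf
    · exact ⟨_, _, hk_feasible_two G hG s t, rfl⟩
    · rintro y ⟨x, hx, rfl⟩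
      obtain ⟨w', hw', hl⟩ := main x hx
      have h1 : w.length ≤ w'.length := by
        rw [hwl]; exact Nat.find_min' hex ⟨w', hw', rfl⟩
      have h2 : (w.length : ℝ) ≤ w'.length := by exact_mod_cast h1
      linarith
  have hsq : Real.sqrt 2 ≤ 3 / 2 := by
    rw [Real.sqrt_le_left (by norm_num)]; norm_num
  have hnn : (0 : ℝ) ≤ w.length := Nat.cast_nonneg _
  nlinarith
end

section
/- For every ε > 0 there exists N ∈ ℕ such that for every connected simple graph G on n ≥ N vertices in which every block has maximum degree at most 3, and all vertices s,t of G, the graph G has a walk from s to t visiting every vertex of G of length at most (3/2 + ε) · OLP(G,s,t). -/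
open SimpleGraph

/-- A block of a graph `G`: a maximal vertex set inducing a connected subgraph
without a cut vertex. -/
def IsBlock {V : Type*} (G : SimpleGraph V) (B : Set V) : Prop :=
  (G.induce B).Connected ∧
  (∀ v ∈ B, (G.induce (B \ {v})).Preconnected) ∧
  ∀ B' : Set V, B ⊆ B' → (G.induce B').Connected →
    (∀ v ∈ B', (G.induce (B' \ {v})).Preconnected) → B' = B

set_option linter.unusedSectionVars false

namespace TJ

open Finset

section
variable {V E : Type*} [Fintype V] [DecidableEq V] [DecidableEq E]

/-- indicator of a vertex, mod 2 -/
def dl (p : V) (v : V) : ZMod 2 := if p = v then 1 else 0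

/-- mod 2 boundary of an edge set -/
def bd (a b : E → V) (J : Finset E) (v : V) : ZMod 2 :=
  ∑ e ∈ J, (dl (a e) v + dl (b e) v)

lemma z2 (x : ZMod 2) : x + x = 0 := CharTwo.add_self_eq_zero x

lemma f2 (x : V → ZMod 2) : x + x = 0 := by funext v; exact z2 _

lemma z2' (x : ZMod 2) : x = 0 ∨ x = 1 := by revert x; decide

lemma bd_symmDiff (a b : E → V) (J K : Finset E) :
    bd a b (symmDiff J K) = bd a b J + bd a b K := by
  funext v
  simp only [bd, Pi.add_apply]
  set f : E → ZMod 2 := fun e => dl (a e) v + dl (b e) v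
  have h1 : ∑ e ∈ symmDiff J K, f e = ∑ e ∈ J \ K, f e + ∑ e ∈ K \ J, f e := by
    rw [symmDiff_def, Finset.sup_eq_union, Finset.sum_union]
    exact disjoint_sdiff_sdiff
  have h2 : ∑ e ∈ J, f e = ∑ e ∈ J ∩ K, f e + ∑ e ∈ J \ K, f e :=
    (Finset.sum_inter_add_sum_sdiff J K f).symm
  have h3 : ∑ e ∈ K, f e = ∑ e ∈ K ∩ J, f e + ∑ e ∈ K \ J, f e :=
    (Finset.sum_inter_add_sum_sdiff K J f).symm
  rw [h1, h2, h3, Finset.inter_comm K J]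
  linear_combination - z2 (∑ e ∈ J ∩ K, f e)

lemma bd_singleton (a b : E → V) (e : E) : bd a b {e} = dl (a e) + dl (b e) := by
  funext v; simp [bd]

lemma bd_empty (a b : E → V) : bd a b (∅ : Finset E) = 0 := by
  funext v; simp [bd]

lemma bd_union (a b : E → V) {J K : Finset E} (h : Disjoint J K) :
    bd a b (J ∪ K) = bd a b J + bd a b K := by
  funext v; simp [bd, Finset.sum_union h]

lemma bd_erase (a b : E → V) {J : Finset E} {e : E} (h : e ∈ J) :
    bd a b (J.erase e) = bd a b J + dl (a e) + dl (b e) := by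
  funext v
  simp only [bd, Pi.add_apply]
  rw [← Finset.add_sum_erase J _ h]
  linear_combination - z2 (dl (a e) v) - z2 (dl (b e) v)

lemma sum_dl (S : Finset V) (p : V) : ∑ v ∈ S, dl p v = if p ∈ S then 1 else 0 := by
  simp [dl]

lemma sum_bd (a b : E → V) (J : Finset E) (S : Finset V) :
    ∑ v ∈ S, bd a b J v
      = ∑ e ∈ J, ((if a e ∈ S then 1 else 0) + (if b e ∈ S then 1 else 0) : ZMod 2) := by
  simp only [bd]
  rw [Finset.sum_comm]
  refine Finset.sum_congr rfl fun e _ => ?_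
  rw [Finset.sum_add_distrib, sum_dl, sum_dl]

lemma sum_bd_card (a b : E → V) (J : Finset E) (S : Finset V) :
    ∑ v ∈ S, bd a b J v = ((J.filter (fun e => ¬ (a e ∈ S ↔ b e ∈ S))).card : ZMod 2) := by
  rw [sum_bd, Finset.card_filter, Nat.cast_sum]
  refine Finset.sum_congr rfl fun e _ => ?_
  by_cases h1 : a e ∈ S <;> by_cases h2 : b e ∈ S <;> simp [h1, h2]
  exact z2 1

lemma sum_bd_univ (a b : E → V) (J : Finset E) : ∑ v, bd a b J v = 0 := by
  rw [sum_bd_card]; simp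

lemma bd_zero_of_not_inc (a b : E → V) (J : Finset E) (t : V)
    (h : ∀ e ∈ J, a e ≠ t ∧ b e ≠ t) : bd a b J t = 0 := by
  refine Finset.sum_eq_zero fun e he => ?_
  simp [dl, h e he]

lemma exists_comp (a b : E → V) (M : Finset E) (v : V) :
    ∃ A : Finset V, (∀ x, x ∈ A ↔ ∃ F ⊆ M, bd a b F = dl v + dl x) ∧ v ∈ A ∧
      (∀ e ∈ M, (a e ∈ A ↔ b e ∈ A)) ∧ ∑ x ∈ A, bd a b M x = 0 := by
  classical
  let A : Finset V := Finset.univ.filter (fun x => ∃ F ⊆ M, bd a b F = dl v + dl x)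
  have hA : ∀ x, x ∈ A ↔ ∃ F ⊆ M, bd a b F = dl v + dl x := by intro x; simp [A]
  have hc : ∀ e ∈ M, (a e ∈ A ↔ b e ∈ A) := by
    intro e he
    have hsub : ∀ F ⊆ M, symmDiff F {e} ⊆ M := by
      intro F hF y hy
      rw [Finset.mem_symmDiff] at hy
      rcases hy with hy | hy
      · exact hF hy.1
      · rw [Finset.mem_singleton.1 hy.1]; exact he
    rw [hA, hA]
    constructor
    · rintro ⟨F, hF, h⟩
      refine ⟨_, hsub F hF, ?_⟩
      rw [bd_symmDiff, h, bd_singleton]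
      linear_combination f2 (dl (a e))
    · rintro ⟨F, hF, h⟩
      refine ⟨_, hsub F hF, ?_⟩
      rw [bd_symmDiff, h, bd_singleton]
      linear_combination f2 (dl (b e))
  refine ⟨A, hA, ?_, hc, ?_⟩
  · rw [hA]; exact ⟨∅, by simp, by rw [bd_empty, f2]⟩
  · rw [sum_bd_card, Finset.filter_false_of_mem]
    · simp
    · intro e he; simp [hc e he]

/-- other endpoint -/
def oth (a b : E → V) (t : V) (e : E) : V := if a e = t then b e else a e

lemma bd_oth (a b : E → V) (t : V) (e : E) (h : a e = t ∨ b e = t) :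
    dl (a e) + dl (b e) = dl t + dl (oth a b t e) := by
  unfold oth
  split_ifs with h1
  · rw [h1]
  · rcases h with h | h
    · exact absurd h h1
    · rw [h, add_comm]

lemma find_cycle (a b : E → V) (M D : Finset E) (p t : V) (hpt : p ≠ t)
    (hM : ∀ e ∈ M, a e ≠ t ∧ b e ≠ t)
    (hD : ∀ e ∈ D, (a e = t ∨ b e = t) ∧ oth a b t e ≠ t)
    (hb : bd a b M + bd a b D = dl p + dl t) (h2 : 1 < D.card) :
    ∃ e ∈ D, ∃ e' ∈ D, e ≠ e' ∧ ∃ F ⊆ M, bd a b F = dl (oth a b t e) + dl (oth a b t e') := by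
  classical
  -- a vertex whose component avoids p
  have key : ∀ e ∈ D, (∃ F ⊆ M, bd a b F = dl (oth a b t e) + dl p) ∨
      ∃ e' ∈ D, e ≠ e' ∧ ∃ F ⊆ M, bd a b F = dl (oth a b t e) + dl (oth a b t e') := by
    intro e he
    obtain ⟨A, hA, hv, hc, hs⟩ := exists_comp a b M (oth a b t e)
    by_cases hp : p ∈ A
    · left; exact (hA p).1 hp
    right
    have htA : t ∉ A := by
      intro h
      obtain ⟨F, hF, hFb⟩ := (hA t).1 h
      have h0 := bd_zero_of_not_inc a b F t (fun e he => hM e (hF he))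
      rw [hFb] at h0
      simp [dl, (hD e he).2] at h0
    have h3 : ∑ x ∈ A, bd a b D x = 0 := by
      have : ∑ x ∈ A, (bd a b M + bd a b D) x = ∑ x ∈ A, (dl p + dl t) x := by rw [hb]
      simp only [Pi.add_apply, Finset.sum_add_distrib, sum_dl, hs] at this
      simpa [hp, htA] using this
    rw [sum_bd_card] at h3
    have h4 : D.filter (fun e => ¬ (a e ∈ A ↔ b e ∈ A)) = D.filter (fun e => oth a b t e ∈ A) := by
      refine Finset.filter_congr fun f hf => ?_
      have := hD f hf
      unfold oth
      split_ifs with h1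
      · rw [h1]; simp [htA]
      · rcases this.1 with h | h
        · exact absurd h h1
        · rw [h]; simp [htA]
    rw [h4] at h3
    have h5 : Even (D.filter (fun e => oth a b t e ∈ A)).card := (ZMod.natCast_eq_zero_iff_even).1 h3
    have h6 : e ∈ D.filter (fun e => oth a b t e ∈ A) := by simp [he, hv]
    have h7 : 1 < (D.filter (fun e => oth a b t e ∈ A)).card := by
      have : 0 < (D.filter (fun e => oth a b t e ∈ A)).card := Finset.card_pos.2 ⟨e, h6⟩
      rcases h5 with ⟨r, hr⟩
      omega
    obtain ⟨e', he', hne⟩ := Finset.exists_mem_ne h7 e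
    rw [Finset.mem_filter] at he'
    exact ⟨e', he'.1, hne.symm, (hA _).1 he'.2⟩
  obtain ⟨e, he, e', he', hne⟩ := Finset.one_lt_card.1 h2
  rcases key e he with ⟨F, hF, h⟩ | ⟨f, hf, hne', h⟩
  · rcases key e' he' with ⟨F', hF', h'⟩ | ⟨f, hf, hne', h'⟩
    · refine ⟨e, he, e', he', hne, symmDiff F F', ?_, ?_⟩
      · intro y hy
        rw [Finset.mem_symmDiff] at hy
        rcases hy with hy | hy
        · exact hF hy.1
        · exact hF' hy.1
      · rw [bd_symmDiff, h, h']
        linear_combination f2 (dl p)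
    · exact ⟨e', he', f, hf, hne', h'⟩
  · exact ⟨e, he, f, hf, hne', h⟩

lemma card_symmDiff_add (J F : Finset E) :
    (symmDiff J F).card + (J ∩ F).card = J.card + (F \ J).card := by
  have h1 : (symmDiff J F).card = (J \ F).card + (F \ J).card := by
    rw [symmDiff_def, Finset.sup_eq_union, Finset.card_union_of_disjoint]
    exact disjoint_sdiff_sdiff
  have := Finset.card_inter_add_card_sdiff J F
  omega

lemma parity_card (a b : E → V) (c : V → Bool) (J : Finset E) (h : ∀ e ∈ J, c (a e) ≠ c (b e)) :
    (J.card : ZMod 2) = ∑ v ∈ Finset.univ.filter (fun v => c v = true), bd a b J v := by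
  rw [sum_bd_card, Finset.filter_true_of_mem]
  intro e he
  have := h e he
  simp only [Finset.mem_filter, Finset.mem_univ, true_and]
  intro h'
  apply this
  cases h1 : c (a e) <;> cases h2 : c (b e) <;> simp_all

lemma prop1 (l f i e e' : Prop) (h1 : f → ¬ i) (h2 : e → i) (h3 : e' → i) :
    (((l ∧ ¬f ∨ f ∧ ¬l) ∧ ¬(e ∨ e') ∨ (e ∨ e') ∧ ¬(l ∧ ¬f ∨ f ∧ ¬l)) ∧ ¬i) ↔
      (l ∧ ¬i) ∧ ¬f ∨ f ∧ ¬(l ∧ ¬i) := by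
  by_cases i <;> by_cases f <;> simp_all

lemma prop2 (l f i e e' : Prop) (h1 : f → ¬ i) (h2 : e → l) (h3 : e' → l) :
    (((l ∧ ¬f ∨ f ∧ ¬l) ∧ ¬(e ∨ e') ∨ (e ∨ e') ∧ ¬(l ∧ ¬f ∨ f ∧ ¬l)) ∧ i) →
      ¬ e ∧ l ∧ i := by
  by_cases i <;> by_cases f <;> simp_all
  tauto

set_option maxHeartbeats 1000000 in
lemma key (a b : E → V) (c : V → Bool) (E0 : Finset E) (hbip : ∀ e ∈ E0, c (a e) ≠ c (b e))
    (T : V → ZMod 2) (J : Finset E) (hJ : J ⊆ E0) (hJT : bd a b J = T)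
    (hmin : ∀ K ⊆ E0, bd a b K = T → J.card ≤ K.card) (hne : J.Nonempty) :
    ∃ t, T t = 1 ∧ ∀ L ⊆ E0, bd a b L = T →
      J.card ≤ (L.filter (fun e => ¬ (a e = t ∨ b e = t))).card + 1 := by
  classical
  obtain ⟨e0, he0⟩ := hne
  set p := a e0 with hp
  let Q : Finset (Finset E) := E0.powerset.filter (fun K => ∃ x, bd a b K = T + dl p + dl x)
  have hQ1 : J.erase e0 ∈ Q := by
    simp only [Q, Finset.mem_filter, Finset.mem_powerset]
    exact ⟨(Finset.erase_subset _ _).trans hJ, b e0, by rw [bd_erase a b he0, hJT]⟩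
  obtain ⟨J', hJ'Q, hJ'min⟩ := Finset.exists_min_image Q Finset.card ⟨_, hQ1⟩
  have hlt : J'.card < J.card := by
    have := hJ'min _ hQ1
    have h2 := Finset.card_erase_lt_of_mem he0
    omega
  simp only [Q, Finset.mem_filter, Finset.mem_powerset] at hJ'Q
  obtain ⟨hJ'E, t, hJ't⟩ := hJ'Q
  have H : ∀ R ⊆ E0, ∀ x, bd a b R = T + dl p + dl x → J'.card ≤ R.card := by
    intro R hR x hx
    apply hJ'min
    simp only [Q, Finset.mem_filter, Finset.mem_powerset]
    exact ⟨hR, x, hx⟩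
  have hpt : p ≠ t := by
    intro h
    have := hmin J' hJ'E (by rw [hJ't, ← h]; linear_combination f2 (dl p))
    omega
  have hno : ∀ e ∈ J', ¬ (a e = t ∨ b e = t) := by
    intro e he hinc
    have h1 := H (J'.erase e) ((Finset.erase_subset _ _).trans hJ'E) (oth a b t e) (by
      rw [bd_erase a b he, hJ't, add_assoc (T + dl p + dl t), bd_oth a b t e hinc]
      linear_combination f2 (dl t))
    have h2 := Finset.card_erase_lt_of_mem he
    omega
  have hTt : T t = 1 := by
    have h0 := bd_zero_of_not_inc a b J' t (fun e he => by have := hno e he; tauto)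
    rw [hJ't] at h0
    simp only [Pi.add_apply, dl, hpt, if_false, if_true] at h0
    rcases z2' (T t) with h | h
    · rw [h] at h0; simp at h0
    · exact h
  have hoth : ∀ e ∈ E0, (a e = t ∨ b e = t) → c (oth a b t e) ≠ c t := by
    intro e he hinc
    have := hbip e he
    unfold oth
    split_ifs with h1
    · rw [← h1]; exact this.symm
    · rcases hinc with h | h
      · exact absurd h h1
      · rw [← h]; exact this
  have hpar : ∀ R ⊆ E0, ∀ v, c v ≠ c t → bd a b R = T + dl p + dl v → J'.card + 1 ≤ R.card := by
    intro R hR v hv hb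
    have h1 := H R hR v hb
    rcases Nat.lt_or_ge J'.card R.card with h | h
    · exact h
    exfalso
    have h2 : R.card = J'.card := le_antisymm h h1
    have e1 := parity_card a b c R (fun e he => hbip e (hR he))
    have e2 := parity_card a b c J' (fun e he => hbip e (hJ'E he))
    rw [h2, e2, hb, hJ't] at e1
    simp only [Pi.add_apply, Finset.sum_add_distrib, sum_dl, Finset.mem_filter, Finset.mem_univ,
      true_and] at e1
    have e3 := add_left_cancel e1
    cases h3 : c v <;> cases h4 : c t <;> simp_all
  refine ⟨t, hTt, ?_⟩
  suffices ∀ n, ∀ L ⊆ E0, bd a b L = T → (L.filter (fun e => (a e = t ∨ b e = t))).card ≤ n →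
      J.card ≤ (L.filter (fun e => ¬ (a e = t ∨ b e = t))).card + 1 by
    intro L hL hLT; exact this _ L hL hLT le_rfl
  intro n
  induction n with
  | zero =>
    intro L hL hLT hc
    have h1 := hmin L hL hLT
    have h2 := Finset.card_filter_add_card_filter_not (s := L) (fun e => (a e = t ∨ b e = t))
    omega
  | succ n ih =>
    intro L hL hLT hc
    set D := L.filter (fun e => (a e = t ∨ b e = t)) with hD
    set L' := L.filter (fun e => ¬ (a e = t ∨ b e = t)) with hL'
    have h1 := hmin L hL hLT
    have h2 : D.card + L'.card = L.card :=
      Finset.card_filter_add_card_filter_not (s := L) (fun e => (a e = t ∨ b e = t))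
    by_cases hD1 : D.card ≤ 1
    · omega
    push Not at hD1
    have hdisj : Disjoint D L' := Finset.disjoint_filter_filter_not _ _ _
    have hun : D ∪ L' = L := Finset.filter_union_filter_not_eq _ _
    have hbdL : bd a b D + bd a b L' = T := by rw [← bd_union a b hdisj, hun, hLT]
    have hM : ∀ e ∈ symmDiff L' J', a e ≠ t ∧ b e ≠ t := by
      intro e he
      rw [Finset.mem_symmDiff] at he
      rcases he with he | he
      · have := (Finset.mem_filter.1 he.1).2; tauto
      · have := hno e he.1; tauto
    obtain ⟨e, he, e', he', hee, F, hF, hFb⟩ := find_cycle a b (symmDiff L' J') D p t hpt hM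
      (by
        intro e he
        have h := Finset.mem_filter.1 he
        exact ⟨h.2, fun h' => hoth e (hL h.1) h.2 (by rw [h'])⟩)
      (by
        rw [bd_symmDiff, hJ't]
        linear_combination hbdL + f2 T) hD1
    have heL := Finset.mem_filter.1 he
    have heL' := Finset.mem_filter.1 he'
    have hFE : F ⊆ E0 := by
      intro f hf
      have := hF hf
      rw [Finset.mem_symmDiff] at this
      rcases this with h | h
      · exact hL (Finset.mem_filter.1 h.1).1
      · exact hJ'E h.1
    have hFt : ∀ f ∈ F, ¬ (a f = t ∨ b f = t) := by
      intro f hf; have := hM f (hF hf); tauto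
    -- minimality of the join
    have hR := hpar (insert e (symmDiff J' F)) (by
        intro f hf
        rw [Finset.mem_insert, Finset.mem_symmDiff] at hf
        rcases hf with h | h | h
        · rw [h]; exact hL heL.1
        · exact hJ'E h.1
        · exact hFE h.1) (oth a b t e') (hoth e' (hL heL'.1) heL'.2) (by
        rw [Finset.insert_eq, bd_union, bd_symmDiff, bd_singleton, hJ't, hFb, bd_oth a b t e heL.2]
        · linear_combination f2 (dl t) + f2 (dl (oth a b t e))
        · rw [Finset.disjoint_singleton_left, Finset.mem_symmDiff]
          have h1 := hno e
          have h2 := hFt e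
          tauto)
    have hR2 := Finset.card_insert_le e (symmDiff J' F)
    have c1 := card_symmDiff_add J' F
    have c2 := card_symmDiff_add L' F
    have s1 : J' ∩ F = F \ L' := by
      ext f
      have := @hF f
      rw [Finset.mem_symmDiff] at this
      simp only [Finset.mem_inter, Finset.mem_sdiff]
      tauto
    have s2 : L' ∩ F = F \ J' := by
      ext f
      have := @hF f
      rw [Finset.mem_symmDiff] at this
      simp only [Finset.mem_inter, Finset.mem_sdiff]
      tauto
    rw [s1] at c1
    rw [s2] at c2
    let L2 := symmDiff (symmDiff L F) {e, e'}
    have hpair : bd a b ({e, e'} : Finset E) = dl (oth a b t e) + dl (oth a b t e') := by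
      rw [Finset.insert_eq, bd_union, bd_singleton, bd_singleton, bd_oth a b t e heL.2,
        bd_oth a b t e' heL'.2]
      · linear_combination f2 (dl t)
      · simpa using hee
    have hL2 : L2 ⊆ E0 := by
      intro f hf
      simp only [L2, Finset.mem_symmDiff, Finset.mem_insert, Finset.mem_singleton] at hf
      rcases hf with ⟨h | h, _⟩ | ⟨h | h, _⟩
      · exact hL h.1
      · exact hFE h.1
      · rw [h]; exact hL heL.1
      · rw [h]; exact hL heL'.1
    have hL2T : bd a b L2 = T := by
      simp only [L2]
      rw [bd_symmDiff, bd_symmDiff, hLT, hFb, hpair]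
      linear_combination f2 (dl (oth a b t e)) + f2 (dl (oth a b t e'))
    have g1 : L2.filter (fun e => ¬ (a e = t ∨ b e = t)) = symmDiff L' F := by
      ext f
      have h1 := hFt f
      have h2 : f = e → (a f = t ∨ b f = t) := by rintro rfl; exact heL.2
      have h3 : f = e' → (a f = t ∨ b f = t) := by rintro rfl; exact heL'.2
      simp only [L2, hL', Finset.mem_filter, Finset.mem_symmDiff, Finset.mem_insert,
        Finset.mem_singleton]
      exact prop1 _ _ _ _ _ h1 h2 h3
    have g2 : L2.filter (fun e => (a e = t ∨ b e = t)) ⊆ D.erase e := by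
      intro f
      have h1 := hFt f
      have h3 : f = e' → f ∈ L := by rintro rfl; exact heL'.1
      have h4 : f = e → f ∈ L := by rintro rfl; exact heL.1
      simp only [L2, hD, Finset.mem_filter, Finset.mem_symmDiff, Finset.mem_insert,
        Finset.mem_singleton, Finset.mem_erase]
      exact prop2 _ _ _ _ _ h1 h4 h3
    have g3 := Finset.card_le_card g2
    have g4 := Finset.card_erase_lt_of_mem he
    have := ih L2 hL2 hL2T (by omega)
    rw [g1] at this
    omega

end
end TJ

namespace TJ

open Finset

section
variable {V E : Type*} [Fintype V] [DecidableEq V] [DecidableEq E]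

lemma exists_min (a b : E → V) (E0 : Finset E) (T : V → ZMod 2)
    (h : ∃ J ⊆ E0, bd a b J = T) :
    ∃ J ⊆ E0, bd a b J = T ∧ ∀ K ⊆ E0, bd a b K = T → J.card ≤ K.card := by
  classical
  obtain ⟨J, hJ, hJT⟩ := h
  obtain ⟨K, hK, hm⟩ := Finset.exists_min_image (E0.powerset.filter (fun J => bd a b J = T))
    Finset.card ⟨J, by simp [hJ, hJT]⟩
  simp only [Finset.mem_filter, Finset.mem_powerset] at hK hm
  exact ⟨K, hK.1, hK.2, fun L h1 h2 => hm L ⟨h1, h2⟩⟩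

lemma bd_comp (a b : E → V) (f : V → V) (J : Finset E) (S : Finset V) :
    ∑ v ∈ Finset.univ.filter (fun v => f v ∈ S), bd a b J v
      = ∑ v ∈ S, bd (f ∘ a) (f ∘ b) J v := by
  rw [sum_bd, sum_bd]; simp

set_option maxHeartbeats 1000000 in
lemma seymour (n : ℕ) : ∀ (a b : E → V) (c : V → Bool) (E0 : Finset E) (T : V → ZMod 2)
    (y : E → ℝ), (∀ e ∈ E0, c (a e) ≠ c (b e)) → (∀ e, 0 ≤ y e) →
    (∀ S : Finset V, ∑ v ∈ S, T v = 1 →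
      1 ≤ ∑ e ∈ E0.filter (fun e => ¬ (a e ∈ S ↔ b e ∈ S)), y e) →
    (∃ J ⊆ E0, bd a b J = T) → E0.card ≤ n →
    ∃ J ⊆ E0, bd a b J = T ∧ (J.card : ℝ) ≤ ∑ e ∈ E0, y e := by
  classical
  induction n with
  | zero =>
    intro a b c E0 T y _ hy _ ⟨J, hJ, hJT⟩ hn
    have : E0 = ∅ := by simpa using hn
    subst this
    have : J = ∅ := by simpa using hJ
    subst this
    exact ⟨∅, by simp, hJT, by simp⟩
  | succ n ih =>
    intro a b c E0 T y hbip hy hcut hex hn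
    obtain ⟨J, hJ, hJT, hmin⟩ := exists_min a b E0 T hex
    refine ⟨J, hJ, hJT, ?_⟩
    rcases Finset.eq_empty_or_nonempty J with h0 | hne
    · subst h0
      simpa using Finset.sum_nonneg (fun e (_ : e ∈ E0) => hy e)
    obtain ⟨t, hTt, ht⟩ := key a b c E0 hbip T J hJ hJT hmin hne
    let inc : E → Prop := fun e => a e = t ∨ b e = t
    let N : Finset V := (E0.filter inc).image (oth a b t)
    have htN : t ∉ N := by
      intro h
      simp only [N, Finset.mem_image, Finset.mem_filter] at h
      obtain ⟨e, ⟨he, hi⟩, ho⟩ := h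
      have := hbip e he
      unfold oth at ho
      split_ifs at ho with h1
      · rw [h1, ho] at this; exact this rfl
      · exact h1 ho
    -- an incident edge
    have hinc : ∃ e ∈ E0, inc e := by
      by_contra hcon
      push Not at hcon
      have := bd_zero_of_not_inc a b J t (fun e he => by
        have := hcon e (hJ he); simp only [inc] at this; tauto)
      rw [hJT, hTt] at this
      exact one_ne_zero this
    obtain ⟨e1, he1, hi1⟩ := hinc
    let u := oth a b t e1
    have huN : u ∈ N := Finset.mem_image.2 ⟨e1, by simp [he1, hi1], rfl⟩
    let f : V → V := fun x => if x = t ∨ x ∈ N then u else x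
    have hNc : ∀ v ∈ N, c v ≠ c t := by
      intro v hv
      simp only [N, Finset.mem_image, Finset.mem_filter] at hv
      obtain ⟨e, ⟨he, hi⟩, ho⟩ := hv
      have := hbip e he
      unfold oth at ho
      split_ifs at ho with h1
      · rw [← h1, ← ho]; exact this.symm
      · rcases hi with h | h
        · exact absurd h h1
        · rw [← h, ← ho]; exact this
    have hfc : ∀ v, v ≠ t → c (f v) = c v := by
      intro v hv
      simp only [f]
      split_ifs with h
      · rcases h with h | h
        · exact absurd h hv
        · have h1 := hNc v h
          have h2 := hNc u huN
          cases hh : c t <;> simp_all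
      · rfl
    have hends : ∀ e ∈ E0, inc e → (a e = t ∨ a e ∈ N) ∧ (b e = t ∨ b e ∈ N) := by
      intro e he hi
      have hm : oth a b t e ∈ N := Finset.mem_image.2 ⟨e, by simp [he, hi], rfl⟩
      unfold oth at hm
      split_ifs at hm with h1
      · exact ⟨Or.inl h1, Or.inr hm⟩
      · refine ⟨Or.inr hm, Or.inl ?_⟩
        rcases hi with h | h
        · exact absurd h h1
        · exact h
    let E1 := E0.filter (fun e => ¬ inc e)
    let T' : V → ZMod 2 := fun w => ∑ v ∈ Finset.univ.filter (fun v => f v ∈ ({w} : Finset V)), T v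
    have hT'S : ∀ S : Finset V, ∑ w ∈ S, T' w = ∑ v ∈ Finset.univ.filter (fun v => f v ∈ S), T v := by
      intro S
      rw [← hJT, bd_comp]
      refine Finset.sum_congr rfl fun w _ => ?_
      simp only [T']
      rw [← hJT, bd_comp]; simp
    have hE1card : E1.card ≤ n := by
      have : E1 ⊂ E0 := by
        refine Finset.ssubset_iff_subset_ne.2 ⟨Finset.filter_subset _ _, fun h => ?_⟩
        have : e1 ∈ E1 := by rw [h]; exact he1
        exact (Finset.mem_filter.1 this).2 hi1
      have := Finset.card_lt_card this
      omega
    obtain ⟨K, hK, hKT, hKc⟩ := ih (f ∘ a) (f ∘ b) c E1 T' y (by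
        intro e he
        obtain ⟨he, hi⟩ := Finset.mem_filter.1 he
        simp only [inc, not_or] at hi
        simp only [Function.comp]
        rw [hfc _ hi.1, hfc _ hi.2]; exact hbip e he) hy (by
        intro S hS
        rw [hT'S] at hS
        refine (hcut _ hS).trans (le_of_eq ?_)
        refine Finset.sum_congr ?_ fun _ _ => rfl
        ext e
        simp only [E1, Finset.mem_filter, Finset.mem_univ, true_and, Function.comp]
        constructor
        · rintro ⟨h1, h2⟩
          refine ⟨⟨h1, fun hi => h2 ?_⟩, h2⟩
          obtain ⟨h3, h4⟩ := hends e h1 hi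
          simp only [f]
          rw [if_pos h3, if_pos h4]
        · rintro ⟨⟨h1, _⟩, h2⟩
          exact ⟨h1, h2⟩) (by
        refine ⟨J.filter (fun e => ¬ inc e), Finset.filter_subset_filter _ hJ, ?_⟩
        funext w
        simp only [T']
        rw [← hJT, bd_comp]
        simp only [Finset.sum_singleton, bd]
        rw [Finset.sum_filter]
        refine Finset.sum_congr rfl fun e he => ?_
        by_cases hi : inc e
        · rw [if_neg (not_not.2 hi)]
          obtain ⟨h3, h4⟩ := hends e (hJ he) hi
          simp only [f, Function.comp]
          rw [if_pos h3, if_pos h4, z2]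
        · rw [if_pos hi]) hE1card
    -- extend K to a T-join of the original graph
    have hsel : ∀ v ∈ N, ∃ e, (e ∈ E0 ∧ inc e) ∧ oth a b t e = v := by
      intro v hv
      simpa only [N, Finset.mem_image, Finset.mem_filter] using hv
    have : Nonempty E := ⟨e1⟩
    choose! ε hε1 hε2 using hsel
    let g : V → ZMod 2 := fun v => bd a b K v + T v
    let D : Finset E := (N.filter (fun v => g v = 1)).image ε
    have hDK : Disjoint K D := by
      rw [Finset.disjoint_left]
      intro e he hd
      have h1 := (Finset.mem_filter.1 (hK he)).2
      simp only [D, Finset.mem_image, Finset.mem_filter] at hd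
      obtain ⟨v, ⟨hv, _⟩, rfl⟩ := hd
      exact h1 (hε1 v hv).2
    have hDE : ∀ e ∈ D, e ∈ E0 ∧ inc e := by
      intro e hd
      simp only [D, Finset.mem_image, Finset.mem_filter] at hd
      obtain ⟨v, ⟨hv, _⟩, rfl⟩ := hd
      exact hε1 v hv
    have hbdD : ∀ x, x ≠ t → bd a b D x = if x ∈ N then g x else 0 := by
      intro x hx
      simp only [bd, D]
      rw [Finset.sum_image (by
        intro v hv w hw h
        simp only [Finset.coe_filter, Set.mem_ofPred_eq] at hv hw
        rw [← hε2 v hv.1, ← hε2 w hw.1, h])]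
      have : ∀ v ∈ N.filter (fun v => g v = 1), dl (a (ε v)) x + dl (b (ε v)) x = dl v x := by
        intro v hv
        have hv := (Finset.mem_filter.1 hv).1
        have := congrFun (bd_oth a b t (ε v) (hε1 v hv).2) x
        simp only [Pi.add_apply] at this
        rw [this, hε2 v hv]
        simp [dl, hx.symm]
      rw [Finset.sum_congr rfl this]
      simp only [dl, Finset.sum_ite_eq', Finset.mem_filter]
      by_cases hxN : x ∈ N
      · rcases z2' (g x) with h | h <;> simp [hxN, h]
      · simp [hxN]
    have hoff : ∀ x, x ≠ t → bd a b (K ∪ D) x = T x := by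
      intro x hx
      rw [bd_union a b hDK, Pi.add_apply, hbdD x hx]
      split_ifs with hxN
      · simp only [g]
        linear_combination z2 (bd a b K x)
      · have h1 : ∑ v ∈ Finset.univ.filter (fun v => f v ∈ ({x} : Finset V)), bd a b K v = T' x := by
          rw [bd_comp, hKT]; simp
        have h2 : Finset.univ.filter (fun v => f v ∈ ({x} : Finset V)) = {x} := by
          ext v
          simp only [Finset.mem_filter, Finset.mem_univ, true_and, Finset.mem_singleton, f]
          split_ifs with h
          · constructor
            · intro h'; rw [← h'] at hxN; exact absurd huN hxN
            · intro h'; subst h'; rcases h with h | h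
              · exact absurd h hx
              · exact absurd h hxN
          · rfl
        simp only [T'] at h1
        rw [h2] at h1
        simpa using h1
    have hall : bd a b (K ∪ D) = T := by
      funext x
      by_cases hx : x = t
      · subst hx
        have h1 := sum_bd_univ a b (K ∪ D)
        have h2 := sum_bd_univ a b J
        rw [hJT] at h2
        rw [← Finset.add_sum_erase _ _ (Finset.mem_univ x)] at h1 h2
        have h3 : ∑ v ∈ Finset.univ.erase x, bd a b (K ∪ D) v = ∑ v ∈ Finset.univ.erase x, T v :=
          Finset.sum_congr rfl fun v hv => hoff v (Finset.ne_of_mem_erase hv)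
        rw [h3] at h1
        exact add_right_cancel (h1.trans h2.symm)
      · exact hoff x hx
    have hfin := ht (K ∪ D) (by
      intro e he
      rcases Finset.mem_union.1 he with h | h
      · exact (Finset.mem_filter.1 (hK h)).1
      · exact (hDE e h).1) hall
    have hfil : (K ∪ D).filter (fun e => ¬ (a e = t ∨ b e = t)) ⊆ K := by
      intro e he
      obtain ⟨h1, h2⟩ := Finset.mem_filter.1 he
      rcases Finset.mem_union.1 h1 with h | h
      · exact h
      · exact absurd (hDE e h).2 h2
    have hle : J.card ≤ K.card + 1 := hfin.trans (Nat.add_le_add_right (Finset.card_le_card hfil) 1)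
    have hcut1 := hcut {t} (by simp [hTt])
    have hcut2 : ∑ e ∈ E0.filter (fun e => ¬ (a e ∈ ({t} : Finset V) ↔ b e ∈ ({t} : Finset V))), y e
        ≤ ∑ e ∈ E0.filter inc, y e := by
      refine Finset.sum_le_sum_of_subset_of_nonneg ?_ (fun e _ _ => hy e)
      intro e he
      simp only [Finset.mem_filter, Finset.mem_singleton, inc] at he ⊢
      refine ⟨he.1, ?_⟩
      have := he.2
      tauto
    have hsum := Finset.sum_filter_add_sum_filter_not E0 inc y
    have hle' : (J.card : ℝ) ≤ K.card + 1 := by exact_mod_cast hle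
    have : ∑ e ∈ E1, y e = ∑ e ∈ E0.filter (fun e => ¬ inc e), y e := rfl
    linarith

/-- Edmonds and Johnson: fractional T-joins bound integral ones. -/
lemma tjoin (a b : E → V) (E0 : Finset E) (T : V → ZMod 2)
    (y : E → ℝ) (hy : ∀ e, 0 ≤ y e)
    (hcut : ∀ S : Finset V, ∑ v ∈ S, T v = 1 →
      1 ≤ ∑ e ∈ E0.filter (fun e => ¬ (a e ∈ S ↔ b e ∈ S)), y e)
    (hex : ∃ J ⊆ E0, bd a b J = T) [Fintype E] :
    ∃ J ⊆ E0, bd a b J = T ∧ (J.card : ℝ) ≤ ∑ e ∈ E0, y e := by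
  classical
  let a' : E × Bool → V ⊕ E := fun p => if p.2 then Sum.inl (a p.1) else Sum.inl (b p.1)
  let b' : E × Bool → V ⊕ E := fun p => Sum.inr p.1
  let E0' : Finset (E × Bool) := E0 ×ˢ Finset.univ
  let T' : V ⊕ E → ZMod 2 := Sum.elim T 0
  have hbdl : ∀ (J : Finset E) (v : V), bd a' b' (J ×ˢ (Finset.univ : Finset Bool)) (Sum.inl v) = bd a b J v := by
    intro J v
    simp only [bd, Finset.sum_product, Fintype.sum_bool, a', b', dl]
    simp
  have hbdr : ∀ (J : Finset (E × Bool)) (e : E), bd a' b' J (Sum.inr e) =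
      (if (e, true) ∈ J then 1 else 0) + (if (e, false) ∈ J then 1 else 0) := by
    intro J e
    have h : ∀ p : E × Bool, dl (a' p) (Sum.inr e) + dl (b' p) (Sum.inr e)
       = (if p = (e, true) then 1 else 0) + (if p = (e, false) then 1 else 0) := by
      rintro ⟨f, i⟩
      cases i <;> simp [a', b', dl]
    simp only [bd, h, Finset.sum_add_distrib, Finset.sum_ite_eq']
  have hfull : ∀ J : Finset (E × Bool), bd a' b' J = T' → ∃ J0 : Finset E, J = J0 ×ˢ Finset.univ := by
    intro J hJ
    refine ⟨Finset.univ.filter (fun e => (e, true) ∈ J), ?_⟩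
    ext ⟨e, i⟩
    have h1 := hbdr J e
    rw [hJ] at h1
    simp only [T', Sum.elim_inr, Pi.zero_apply] at h1
    simp only [Finset.mem_product, Finset.mem_filter, Finset.mem_univ, true_and, and_true]
    cases i
    · by_cases h2 : (e, true) ∈ J <;> by_cases h3 : (e, false) ∈ J
      · simp [h2, h3]
      · simp [h2, h3] at h1
      · simp [h2, h3] at h1
      · simp [h2, h3]
    · rfl
  obtain ⟨J, hJ, hJT⟩ := hex
  have hprod : ∀ J : Finset E, bd a b J = T → bd a' b' (J ×ˢ (Finset.univ : Finset Bool)) = T' := by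
    intro J hJT
    funext v
    rcases v with v | e
    · rw [hbdl, hJT]; rfl
    · rw [hbdr]; simp only [Finset.mem_product, Finset.mem_univ, and_true]; rw [z2]; rfl
  obtain ⟨K, hK, hKT, hKc⟩ := seymour E0'.card a' b' (fun v => v.isLeft) E0' T' (fun p => y p.1)
    (by rintro ⟨e, i⟩ _; cases i <;> simp [a', b']) (fun p => hy _) (by
      intro S hS
      have h1 : ∑ v ∈ Finset.univ.filter (fun v : V => Sum.inl v ∈ S), T v = 1 := by
        rw [← hS, Finset.sum_filter, ← Finset.sum_filter_add_sum_filter_not S (fun v => v.isLeft)]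
        rw [← Finset.sum_filter]
        have h0 : ∑ v ∈ S.filter (fun v => ¬ v.isLeft = true), T' v = 0 := by
          refine Finset.sum_eq_zero fun v hv => ?_
          rcases v with v | e
          · simp at hv
          · rfl
        rw [h0, add_zero]
        refine Finset.sum_bij (fun v _ => Sum.inl v) ?_ ?_ ?_ ?_
        · intro v hv; simpa using hv
        · intro v _ w _ h; exact Sum.inl_injective h
        · intro v hv
          rcases v with v | e
          · exact ⟨v, by simpa using hv, rfl⟩
          · simp at hv
        · intro v _; rfl
      refine (hcut _ h1).trans ?_
      rw [Finset.sum_filter, Finset.sum_filter]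
      simp only [E0']
      rw [Finset.sum_product]
      refine Finset.sum_le_sum fun e _ => ?_
      simp only [Fintype.sum_bool, a', b', Finset.mem_filter, Finset.mem_univ, true_and]
      have := hy e
      by_cases h1 : Sum.inl (a e) ∈ S <;> by_cases h2 : Sum.inl (b e) ∈ S <;>
        by_cases h3 : Sum.inr e ∈ S <;> simp [h1, h2, h3, this])
    ⟨J ×ˢ Finset.univ, Finset.product_subset_product_left hJ, hprod J hJT⟩ le_rfl
  obtain ⟨J0, rfl⟩ := hfull K hKT
  refine ⟨J0, ?_, ?_, ?_⟩
  · intro e he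
    have : (e, true) ∈ E0' := hK (by simp [he])
    simpa [E0'] using this
  · funext v
    rw [← hbdl, hKT]; rfl
  · simp only [E0', Finset.sum_product, Finset.card_product, Finset.sum_const] at hKc
    simp only [Finset.card_univ, Fintype.card_bool, nsmul_eq_mul, Nat.cast_mul, ← Finset.mul_sum] at hKc
    push_cast at hKc
    linarith

end
end TJ

namespace TJ

open Finset

section
variable {V E : Type*} [Fintype V] [DecidableEq V] [DecidableEq E]

/-- adjacency through an edge of `M` -/
def adjM (a b : E → V) (M : Finset E) (x y : V) : Prop :=
  ∃ e ∈ M, (a e = x ∧ b e = y) ∨ (a e = y ∧ b e = x)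

/-- reachability through edges of `M` -/
def rch (a b : E → V) (M : Finset E) (x y : V) : Prop := Relation.ReflTransGen (adjM a b M) x y

lemma rch_symm {a b : E → V} {M : Finset E} {x y : V} (h : rch a b M x y) : rch a b M y x := by
  induction h with
  | refl => exact Relation.ReflTransGen.refl
  | tail _ hstep ih =>
    obtain ⟨e, he, h⟩ := hstep
    exact Relation.ReflTransGen.head ⟨e, he, h.symm⟩ ih

lemma rch_mono {a b : E → V} {M M' : Finset E} (hM : M ⊆ M') {x y : V} (h : rch a b M x y) :
    rch a b M' x y := by
  unfold rch at h
  refine Relation.ReflTransGen.lift id ?_ _ _ h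
  rintro x y ⟨e, he, h⟩
  exact ⟨e, hM he, h⟩

lemma euler (G : SimpleGraph V) (a b : E → V) (n : ℕ) : ∀ M : Finset E, M.card ≤ n →
    (∀ e ∈ M, G.Adj (a e) (b e)) → ∀ s t, bd a b M = dl s + dl t →
    ∃ w : G.Walk s t, w.length ≤ M.card ∧ ∀ v, rch a b M s v → v ∈ w.support := by
  classical
  induction n with
  | zero =>
    intro M hM _ s t hb
    have : M = ∅ := by simpa using hM
    subst this
    have hst : t = s := by
      have := congrFun hb s
      rw [bd_empty] at this
      by_contra h
      simp [dl, h] at this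
    subst hst
    refine ⟨Walk.nil, by simp, ?_⟩
    intro v hv
    rcases Relation.ReflTransGen.cases_head hv with h | ⟨c, ⟨e, he, _⟩, _⟩
    · simp [h]
    · simp at he
  | succ n ih =>
    intro M hM hadj s t hb
    by_cases hex : ∃ e ∈ M, a e = s ∨ b e = s
    swap
    · push Not at hex
      have hst : t = s := by
        have := congrFun hb s
        rw [bd_zero_of_not_inc a b M s hex] at this
        by_contra h
        simp [dl, h] at this
      subst hst
      refine ⟨Walk.nil, by simp, ?_⟩
      intro v hv
      rcases Relation.ReflTransGen.cases_head hv with h | ⟨c, ⟨e, he, h⟩, _⟩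
      · simp [h]
      · have := hex e he
        tauto
    obtain ⟨e, he, hinc⟩ := hex
    set u := oth a b s e with hu
    have hsu : G.Adj s u := by
      have := hadj e he
      rw [hu]; unfold oth
      split_ifs with h1
      · rw [← h1]; exact this
      · rcases hinc with h | h
        · exact absurd h h1
        · rw [← h]; exact this.symm
    have hends : ∀ y, (a e = y ∨ b e = y) → y = s ∨ y = u := by
      intro y hy
      rw [hu]; unfold oth
      split_ifs with h1
      · rcases hy with h | h
        · left; rw [← h, h1]
        · right; exact h.symm
      · rcases hinc with h | h
        · exact absurd h h1
        · rcases hy with h' | h'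
          · right; exact h'.symm
          · left; rw [← h', h]
    set M1 := M.erase e with hM1
    have hM1c : M1.card + 1 = M.card := Finset.card_erase_add_one he
    have hadj1 : ∀ e ∈ M1, G.Adj (a e) (b e) := fun f hf => hadj f (Finset.mem_of_mem_erase hf)
    have hb1 : bd a b M1 = dl u + dl t := by
      rw [hM1, bd_erase a b he, hb, add_assoc (dl s + dl t), bd_oth a b s e hinc]
      linear_combination f2 (dl s)
    have hsplit : ∀ v, rch a b M s v → rch a b M1 s v ∨ rch a b M1 u v := by
      intro v hv
      induction hv with
      | refl => left; exact Relation.ReflTransGen.refl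
      | tail _ hstep ihh =>
        rename_i x y _
        obtain ⟨f, hf, hxy⟩ := hstep
        by_cases hfe : f = e
        · subst hfe
          rcases hends y (by tauto) with h | h
          · left; rw [h]; exact Relation.ReflTransGen.refl
          · right; rw [h]; exact Relation.ReflTransGen.refl
        · have hs : adjM a b M1 x y := ⟨f, Finset.mem_erase.2 ⟨hfe, hf⟩, hxy⟩
          rcases ihh with h | h
          · left; exact h.tail hs
          · right; exact h.tail hs
    by_cases hus : rch a b M1 u s
    · obtain ⟨w, hw, hv⟩ := ih M1 (by omega) hadj1 u t hb1
      refine ⟨Walk.cons hsu w, by simp; omega, ?_⟩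
      intro v hsv
      rw [Walk.support_cons]
      refine List.mem_cons_of_mem _ (hv v ?_)
      rcases hsplit v hsv with h | h
      · exact Relation.ReflTransGen.trans hus h
      · exact h
    · let A : Finset V := Finset.univ.filter (fun v => rch a b M1 s v)
      have hA : ∀ v, v ∈ A ↔ rch a b M1 s v := by intro v; simp [A]
      have hcl : ∀ f ∈ M1, (a f ∈ A ↔ b f ∈ A) := by
        intro f hf
        rw [hA, hA]
        exact ⟨fun h => h.tail ⟨f, hf, Or.inl ⟨rfl, rfl⟩⟩, fun h => h.tail ⟨f, hf, Or.inr ⟨rfl, rfl⟩⟩⟩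
      have huA : u ∉ A := fun h => hus (rch_symm ((hA u).1 h))
      have htA : t ∉ A := by
        intro htA
        have h0 : ∑ x ∈ A, bd a b M1 x = 0 := by
          rw [sum_bd_card, Finset.filter_false_of_mem]
          · simp
          · intro f hf; simp [hcl f hf]
        rw [hb1] at h0
        simp only [Pi.add_apply, Finset.sum_add_distrib, sum_dl] at h0
        simp [huA, htA] at h0
      set MA := M1.filter (fun f => a f ∈ A) with hMA
      set MB := M1.filter (fun f => ¬ a f ∈ A) with hMB
      have hcard : MA.card + MB.card = M1.card := Finset.card_filter_add_card_filter_not _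
      have hdis : Disjoint MA MB := Finset.disjoint_filter_filter_not _ _ _
      have hunion : MA ∪ MB = M1 := Finset.filter_union_filter_not_eq _ _
      have hsum : bd a b MA + bd a b MB = dl u + dl t := by rw [← bd_union a b hdis, hunion, hb1]
      have hbA : bd a b MA = 0 := by
        funext v
        by_cases hv : v ∈ A
        · have h1 : bd a b MB v = 0 := by
            refine bd_zero_of_not_inc a b MB v fun f hf => ?_
            obtain ⟨h1, h2⟩ := Finset.mem_filter.1 hf
            refine ⟨fun h => h2 (by rw [h]; exact hv), fun h => h2 ((hcl f h1).2 (by rw [h]; exact hv))⟩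
          have h2 := congrFun hsum v
          simp only [Pi.add_apply, h1, add_zero] at h2
          rw [h2]
          have hu' : u ≠ v := fun h => huA (by rw [h]; exact hv)
          have ht' : t ≠ v := fun h => htA (by rw [h]; exact hv)
          simp [dl, hu', ht']
        · refine bd_zero_of_not_inc a b MA v fun f hf => ?_
          obtain ⟨h1, h2⟩ := Finset.mem_filter.1 hf
          exact ⟨fun h => hv (by rw [← h]; exact h2), fun h => hv (by rw [← h]; exact (hcl f h1).1 h2)⟩
      have hbB : bd a b MB = dl u + dl t := by rw [← hsum, hbA, zero_add]
      obtain ⟨wA, hwA, hvA⟩ := ih MA (by omega) (fun f hf => hadj1 f (Finset.mem_filter.1 hf).1) s s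
        (by rw [hbA, f2])
      obtain ⟨wB, hwB, hvB⟩ := ih MB (by omega) (fun f hf => hadj1 f (Finset.mem_filter.1 hf).1) u t hbB
      refine ⟨wA.append (Walk.cons hsu wB), by simp; omega, ?_⟩
      intro v hv
      rw [Walk.mem_support_append_iff]
      rcases hsplit v hv with h | h
      · left
        apply hvA
        induction h with
        | refl => exact Relation.ReflTransGen.refl
        | tail hx hstep ihh =>
          rename_i x y
          have hxM := hsplit
          obtain ⟨f, hf, hxy⟩ := hstep
          have hxA : x ∈ A := (hA x).2 hx
          refine (ihh (rch_mono (Finset.erase_subset _ _) hx)).tail ⟨f, Finset.mem_filter.2 ⟨hf, ?_⟩, hxy⟩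
          rcases hxy with ⟨h1, h2⟩ | ⟨h1, h2⟩
          · rw [h1]; exact hxA
          · rw [hcl f hf, h2]; exact hxA
      · right
        rw [Walk.support_cons]
        refine List.mem_cons_of_mem _ (hvB v ?_)
        clear hv
        induction h with
        | refl => exact Relation.ReflTransGen.refl
        | tail hx hstep ihh =>
          rename_i x y
          obtain ⟨f, hf, hxy⟩ := hstep
          refine ihh.tail ⟨f, Finset.mem_filter.2 ⟨hf, fun hfA => ?_⟩, hxy⟩
          have hxA : x ∈ A := by
            rcases hxy with ⟨h1, h2⟩ | ⟨h1, h2⟩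
            · rw [← h1]; exact hfA
            · rw [← h2, ← hcl f hf]; exact hfA
          exact hus (Relation.ReflTransGen.trans hx (rch_symm ((hA x).1 hxA)))

/-- value of a cut -/
def dcut (a b : E → V) (E0 : Finset E) (x : E → ℝ) (S : Finset V) : ℝ :=
  ∑ e ∈ E0.filter (fun e => ¬ (a e ∈ S ↔ b e ∈ S)), x e

/-- narrow cuts -/
def Nar (a b : E → V) (E0 : Finset E) (x : E → ℝ) (s : V) (R : Finset V) : Prop :=
  s ∈ R ∧ R ≠ Finset.univ ∧ dcut a b E0 x R < 2

/-- feasibility -/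
def Feas (a b : E → V) (E0 : Finset E) (x : E → ℝ) (s t : V) : Prop :=
  (∀ e, 0 ≤ x e) ∧ ∀ S : Finset V, S.Nonempty → S ≠ Finset.univ →
    ((s ∈ S ↔ t ∈ S) → 2 ≤ dcut a b E0 x S) ∧ (¬ (s ∈ S ↔ t ∈ S) → 1 ≤ dcut a b E0 x S)

lemma Nar.t_not {a b : E → V} {E0 : Finset E} {x : E → ℝ} {s t : V} (hf : Feas a b E0 x s t)
    {R : Finset V} (h : Nar a b E0 x s R) : t ∉ R := by
  intro ht
  have := (hf.2 R ⟨s, h.1⟩ h.2.1).1 (by simp [h.1, ht])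
  linarith [h.2.2]

lemma Nar.comparable {a b : E → V} {E0 : Finset E} {x : E → ℝ} {s t : V} (hf : Feas a b E0 x s t)
    {R S : Finset V} (hR : Nar a b E0 x s R) (hS : Nar a b E0 x s S) : R ⊆ S ∨ S ⊆ R := by
  by_contra hcon
  push Not at hcon
  have hX : (R \ S).Nonempty := Finset.sdiff_nonempty.2 hcon.1
  have hY : (S \ R).Nonempty := Finset.sdiff_nonempty.2 hcon.2
  have h1 := (hf.2 (R \ S) hX (fun h => by
    have := h ▸ Finset.mem_univ s; simp [hS.1] at this)).1 (by simp [hS.1, hR.t_not hf])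
  have h2 := (hf.2 (S \ R) hY (fun h => by
    have := h ▸ Finset.mem_univ s; simp [hR.1] at this)).1 (by simp [hR.1, hS.t_not hf])
  have h3 : dcut a b E0 x (R \ S) + dcut a b E0 x (S \ R) ≤ dcut a b E0 x R + dcut a b E0 x S := by
    simp only [dcut, Finset.sum_filter]
    rw [← Finset.sum_add_distrib, ← Finset.sum_add_distrib]
    refine Finset.sum_le_sum fun e _ => ?_
    have := hf.1 e
    simp only [Finset.mem_sdiff]
    by_cases a e ∈ R <;> by_cases a e ∈ S <;> by_cases b e ∈ R <;> by_cases b e ∈ S <;>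
      simp [*]
  linarith [hR.2.2, hS.2.2]

set_option maxHeartbeats 1000000 in
lemma exists_edge {a b : E → V} {E0 : Finset E} {x : E → ℝ} {s t : V} (hf : Feas a b E0 x s t)
    {R U S : Finset V} (hR : R = ∅ ∨ Nar a b E0 x s R) (hS : S = Finset.univ ∨ Nar a b E0 x s S)
    (hRU : R ⊆ U) (hUS : U ⊆ S) (hX : (U \ R).Nonempty) (hY : (S \ U).Nonempty) :
    ∃ e ∈ E0, (a e ∈ U \ R ∧ b e ∈ S \ U) ∨ (a e ∈ S \ U ∧ b e ∈ U \ R) := by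
  by_contra hcon
  push Not at hcon
  have hlow : ∀ X : Finset V, X.Nonempty → X ≠ Finset.univ →
      2 - (if s ∈ X then 1 else 0) - (if t ∈ X then 1 else 0) ≤ dcut a b E0 x X := by
    intro X h1 h2
    have := hf.2 X h1 h2
    by_cases hs : s ∈ X <;> by_cases ht : t ∈ X <;> simp [hs, ht] at this ⊢ <;> linarith
  have l1 := hlow _ hX (by
    intro h
    obtain ⟨y, hy⟩ := hY
    have := h ▸ Finset.mem_univ y
    simp only [Finset.mem_sdiff] at hy this
    exact hy.2 this.1)
  have l2 := hlow _ hY (by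
    intro h
    obtain ⟨y, hy⟩ := hX
    have := h ▸ Finset.mem_univ y
    simp only [Finset.mem_sdiff] at hy this
    exact this.2 hy.1)
  have h3 : dcut a b E0 x (U \ R) + dcut a b E0 x (S \ U) ≤ dcut a b E0 x R + dcut a b E0 x S := by
    simp only [dcut, Finset.sum_filter]
    rw [← Finset.sum_add_distrib, ← Finset.sum_add_distrib]
    refine Finset.sum_le_sum fun e he => ?_
    have h0 := hf.1 e
    have hc := hcon e he
    simp only [Finset.mem_sdiff] at hc ⊢
    obtain ⟨hc1, hc2⟩ := hc
    have hreg : ∀ z : V, (z ∈ R ∧ z ∈ U ∧ z ∈ S) ∨ (z ∉ R ∧ z ∈ U ∧ z ∈ S) ∨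
        (z ∉ R ∧ z ∉ U ∧ z ∈ S) ∨ (z ∉ R ∧ z ∉ U ∧ z ∉ S) := by
      intro z
      have i1 := @hRU z
      have i3 := @hUS z
      clear * - i1 i3
      tauto
    rcases hreg (a e) with ⟨h1, h2, h3⟩ | ⟨h1, h2, h3⟩ | ⟨h1, h2, h3⟩ | ⟨h1, h2, h3⟩ <;>
    rcases hreg (b e) with ⟨h4, h5, h6⟩ | ⟨h4, h5, h6⟩ | ⟨h4, h5, h6⟩ | ⟨h4, h5, h6⟩ <;>
    first
    | (simp [h1, h2, h3, h4, h5, h6, h0]; done)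
    | exact absurd ⟨h6, h5⟩ (hc1 ⟨h2, h1⟩)
    | exact absurd ⟨h5, h4⟩ (hc2 ⟨h3, h2⟩)
  have h4 : dcut a b E0 x R + (if s ∈ U \ R then 1 else 0) + (if s ∈ S \ U then 1 else 0) < 2 := by
    rcases hR with h | h
    · subst h
      have : dcut a b E0 x ∅ = 0 := by simp [dcut]
      rw [this]
      by_cases hs : s ∈ U <;> by_cases hs' : s ∈ S <;> simp [hs, hs']
    · have : s ∈ U := hRU h.1
      simp [this, h.1, h.2.2]
  have h5 : dcut a b E0 x S + (if t ∈ U \ R then 1 else 0) + (if t ∈ S \ U then 1 else 0) < 2 := by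
    rcases hS with h | h
    · subst h
      have : dcut a b E0 x Finset.univ = 0 := by simp [dcut]
      rw [this]
      by_cases hs : t ∈ U <;> by_cases hs' : t ∈ R <;> simp [hs, hs']
    · have h1 : t ∉ S := h.t_not hf
      have h2 : t ∉ U := fun h => h1 (hUS h)
      simp [h1, h2, h.2.2]
  linarith

set_option maxHeartbeats 1000000 in
lemma tree {a b : E → V} {E0 : Finset E} {x : E → ℝ} {s t : V} (hf : Feas a b E0 x s t) (k : ℕ) :
    k + 1 ≤ Fintype.card V → ∃ (U : Finset V) (F : Finset E), s ∈ U ∧ U.card = k + 1 ∧ F ⊆ E0 ∧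
      F.card ≤ k ∧ (∀ v ∈ U, rch a b F s v) ∧
      ∀ R, Nar a b E0 x s R →
        (R ⊂ U ∧ (F.filter (fun e => ¬ (a e ∈ R ↔ b e ∈ R))).card = 1) ∨
        (U ⊆ R ∧ (F.filter (fun e => ¬ (a e ∈ R ↔ b e ∈ R))).card = 0) := by
  classical
  induction k with
  | zero =>
    intro _
    refine ⟨{s}, ∅, by simp, by simp, by simp, by simp, ?_, ?_⟩
    · intro v hv
      rw [Finset.mem_singleton.1 hv]; exact Relation.ReflTransGen.refl
    · intro R hR
      right
      exact ⟨by simpa using hR.1, by simp⟩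
  | succ k ih =>
    intro hk
    obtain ⟨U, F, hsU, hUc, hF, hFc, hrch, hnar⟩ := ih (by omega)
    -- the largest narrow set strictly inside `U`
    obtain ⟨R, hRm, hRmax⟩ := Finset.exists_max_image
      (Finset.univ.filter (fun R => R = ∅ ∨ (Nar a b E0 x s R ∧ R ⊂ U))) Finset.card ⟨∅, by simp⟩
    obtain ⟨S, hSm, hSmin⟩ := Finset.exists_min_image
      (Finset.univ.filter (fun S => S = Finset.univ ∨ (Nar a b E0 x s S ∧ ¬ S ⊆ U))) Finset.card
      ⟨Finset.univ, by simp⟩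
    simp only [Finset.mem_filter, Finset.mem_univ, true_and] at hRm hRmax hSm hSmin
    have hRall : ∀ Q, Nar a b E0 x s Q → Q ⊂ U → Q ⊆ R := by
      intro Q hQ hQU
      have hc := hRmax Q (Or.inr ⟨hQ, hQU⟩)
      rcases hRm with h | h
      · subst h
        have : Q = ∅ := by simpa using hc
        rw [this]
      · rcases hQ.comparable hf h.1 with h' | h'
        · exact h'
        · rw [Finset.eq_of_subset_of_card_le h' hc]
    have hSall : ∀ Q, Nar a b E0 x s Q → ¬ Q ⊆ U → S ⊆ Q := by
      intro Q hQ hQU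
      have hc := hSmin Q (Or.inr ⟨hQ, hQU⟩)
      rcases hSm with h | h
      · subst h
        have : Q = Finset.univ := by
          apply Finset.eq_univ_of_card
          exact le_antisymm (Finset.card_le_univ Q) (by simpa using hc)
        rw [this]
      · rcases h.1.comparable hf hQ with h' | h'
        · exact h'
        · rw [Finset.eq_of_subset_of_card_le h' hc]
    have hRU : R ⊆ U ∧ R ≠ U := by
      rcases hRm with h | h
      · subst h
        exact ⟨by simp, fun h => by rw [← h] at hsU; simp at hsU⟩
      · exact ⟨h.2.1, h.2.ne⟩
    have hUS : U ⊆ S ∧ ¬ S ⊆ U := by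
      rcases hSm with h | h
      · subst h
        refine ⟨by simp, fun h => ?_⟩
        have := Finset.card_le_card h
        rw [Finset.card_univ] at this
        omega
      · refine ⟨?_, h.2⟩
        rcases hnar S h.1 with h' | h'
        · exact absurd h'.1.1 h.2
        · exact h'.1
    have hX : (U \ R).Nonempty := by
      rw [Finset.sdiff_nonempty]
      intro h
      exact hRU.2 (Finset.Subset.antisymm hRU.1 h)
    obtain ⟨e, he, hab⟩ := exists_edge hf (hRm.imp id And.left) (hSm.imp id And.left) hRU.1 hUS.1 hX
      (Finset.sdiff_nonempty.2 hUS.2)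
    obtain ⟨w, v, hw, hv, hwv⟩ : ∃ w v, w ∈ U \ R ∧ v ∈ S \ U ∧
        ((a e = w ∧ b e = v) ∨ (a e = v ∧ b e = w)) := by
      rcases hab with h | h
      · exact ⟨a e, b e, h.1, h.2, Or.inl ⟨rfl, rfl⟩⟩
      · exact ⟨b e, a e, h.2, h.1, Or.inr ⟨rfl, rfl⟩⟩
    rw [Finset.mem_sdiff] at hw hv
    have hcr : ∀ Q : Finset V, (¬ (a e ∈ Q ↔ b e ∈ Q)) ↔ ¬ (w ∈ Q ↔ v ∈ Q) := by
      intro Q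
      rcases hwv with ⟨h1, h2⟩ | ⟨h1, h2⟩
      · rw [h1, h2]
      · rw [h1, h2]; exact not_congr ⟨Iff.symm, Iff.symm⟩
    refine ⟨insert v U, insert e F, by simp [hsU], ?_, ?_, ?_, ?_, ?_⟩
    · rw [Finset.card_insert_of_notMem hv.2, hUc]
    · exact Finset.insert_subset he hF
    · exact (Finset.card_insert_le _ _).trans (by omega)
    · intro z hz
      rcases Finset.mem_insert.1 hz with h | h
      · rw [h]
        exact Relation.ReflTransGen.tail (rch_mono (Finset.subset_insert _ _) (hrch w hw.1))
          ⟨e, Finset.mem_insert_self _ _, hwv⟩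
      · exact rch_mono (Finset.subset_insert _ _) (hrch z h)
    · intro Q hQ
      rw [Finset.filter_insert]
      rcases hnar Q hQ with ⟨h1, h2⟩ | ⟨h1, h2⟩
      · left
        have hwQ : w ∉ Q := fun h => hw.2 (hRall Q hQ h1 h)
        have hvQ : v ∉ Q := fun h => hv.2 (h1.1 h)
        rw [if_neg (by rw [hcr]; simp [hwQ, hvQ])]
        exact ⟨h1.trans_subset (Finset.subset_insert _ _), h2⟩
      · by_cases hQU : Q ⊆ U
        · left
          have hQeq : Q = U := Finset.Subset.antisymm hQU h1
          subst hQeq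
          rw [if_pos (by rw [hcr]; simp [hw.1, hv.2])]
          refine ⟨Finset.ssubset_insert hv.2, ?_⟩
          rw [Finset.card_eq_zero] at h2
          rw [h2]; simp
        · right
          have hSQ := hSall Q hQ hQU
          have hvQ := hSQ hv.1
          rw [if_neg (by rw [hcr]; simp [h1 hw.1, hvQ])]
          exact ⟨Finset.insert_subset hvQ h1, h2⟩

lemma gao {a b : E → V} {E0 : Finset E} {x : E → ℝ} {s t : V} [Fintype E]
    (hf : Feas a b E0 x s t) :
    ∃ F ⊆ E0, ∃ J ⊆ E0, F.card + 1 ≤ Fintype.card V ∧ (J.card : ℝ) ≤ (∑ e ∈ E0, x e) / 2 ∧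
      bd a b F + bd a b J = dl s + dl t ∧ ∀ v, rch a b F s v := by
  classical
  have hpos : 0 < Fintype.card V := Fintype.card_pos_iff.2 ⟨s⟩
  obtain ⟨U, F, hsU, hUc, hF, hFc, hrch, hnar⟩ := tree hf (Fintype.card V - 1) (by omega)
  have hU : U = Finset.univ := Finset.eq_univ_of_card _ (by omega)
  subst hU
  have hnar1 : ∀ R, Nar a b E0 x s R → (F.filter (fun e => ¬ (a e ∈ R ↔ b e ∈ R))).card = 1 := by
    intro R hR
    rcases hnar R hR with h | h
    · exact h.2
    · exact absurd (Finset.univ_subset_iff.1 h.1) hR.2.1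
  obtain ⟨A, hA, hsA, hcl, _⟩ := exists_comp a b F s
  have hall : ∀ v, rch a b F s v → v ∈ A := by
    intro v hv
    induction hv with
    | refl => exact hsA
    | tail _ hstep ihh =>
      obtain ⟨f, hf, ⟨h1, h2⟩ | ⟨h1, h2⟩⟩ := hstep
      · rw [← h2, ← hcl f hf, h1]; exact ihh
      · rw [← h1, hcl f hf, h2]; exact ihh
  obtain ⟨P, hP, hPb⟩ := (hA t).1 (hall t (hrch t (Finset.mem_univ t)))
  obtain ⟨J, hJ, hJb, hJc⟩ := tjoin a b E0 (bd a b F + dl s + dl t) (fun e => x e / 2)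
    (fun e => by have := hf.1 e; positivity) (by
      intro S hS
      rw [← Finset.sum_div]
      change 1 ≤ dcut a b E0 x S / 2
      suffices 2 ≤ dcut a b E0 x S by linarith
      have hne : S.Nonempty := by
        rw [Finset.nonempty_iff_ne_empty]
        rintro rfl
        simp at hS
      have hnu : S ≠ Finset.univ := by
        rintro rfl
        simp only [Pi.add_apply, Finset.sum_add_distrib, sum_dl, sum_bd_univ] at hS
        simp only [Finset.mem_univ, if_true, zero_add, z2] at hS
        exact zero_ne_one hS
      by_cases hst : s ∈ S ↔ t ∈ S
      · exact (hf.2 S hne hnu).1 hst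
      by_contra hlt
      push Not at hlt
      simp only [Pi.add_apply, Finset.sum_add_distrib, sum_dl, sum_bd_card] at hS
      have hodd : (F.filter (fun e => ¬ (a e ∈ S ↔ b e ∈ S))).card = 1 := by
        by_cases hs : s ∈ S
        · exact hnar1 S ⟨hs, hnu, hlt⟩
        · have hcomp : ∀ e, (¬ (a e ∈ Sᶜ ↔ b e ∈ Sᶜ)) ↔ ¬ (a e ∈ S ↔ b e ∈ S) := by
            intro e; simp only [Finset.mem_compl]; tauto
          have := hnar1 Sᶜ ⟨by simpa using hs, by simpa using hne.ne_empty, by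
            simpa only [dcut, hcomp] using hlt⟩
          simpa only [hcomp] using this
      rw [hodd] at hS
      by_cases hs : s ∈ S <;> by_cases ht : t ∈ S <;> simp [hs, ht] at hS hst)
    ⟨symmDiff F P, by
      intro e he
      rw [Finset.mem_symmDiff] at he
      rcases he with h | h
      · exact hF h.1
      · exact hF (hP h.1), by rw [bd_symmDiff, hPb, add_assoc]⟩
  refine ⟨F, hF, J, hJ, by omega, ?_, ?_, fun v => hrch v (Finset.mem_univ v)⟩
  · rw [← Finset.sum_div] at hJc; exact hJc
  · rw [hJb]; linear_combination f2 (bd a b F)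

lemma walk_of_feas (G : SimpleGraph V) {a b : E → V} {E0 : Finset E} {x : E → ℝ} {s t : V}
    [Fintype E] (hadj : ∀ e ∈ E0, G.Adj (a e) (b e)) (hf : Feas a b E0 x s t) :
    ∃ w : G.Walk s t, (∀ v, v ∈ w.support) ∧
      (w.length : ℝ) ≤ (Fintype.card V : ℝ) - 1 + (∑ e ∈ E0, x e) / 2 := by
  classical
  obtain ⟨F, hF, J, hJ, hFc, hJc, hb, hr⟩ := gao hf
  have hbd : bd (Sum.elim a a) (Sum.elim b b) (F.disjSum J) = dl s + dl t := by
    rw [← hb]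
    funext v
    simp [bd, Finset.sum_disjSum]
  obtain ⟨w, hw, hv⟩ := euler G (Sum.elim a a) (Sum.elim b b) _ (F.disjSum J) le_rfl (by
    intro e he
    rcases e with e | e
    · exact hadj e (hF (by simpa using he))
    · exact hadj e (hJ (by simpa using he))) s t hbd
  refine ⟨w, fun v => hv v ?_, ?_⟩
  · refine Relation.ReflTransGen.lift id ?_ _ _ (hr v)
    rintro y z ⟨e, he, h⟩
    exact ⟨Sum.inl e, by simpa using he, h⟩
  · rw [Finset.card_disjSum] at hw
    have h1 : (w.length : ℝ) ≤ F.card + J.card := by exact_mod_cast hw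
    have h2 : (F.card : ℝ) + 1 ≤ Fintype.card V := by exact_mod_cast hFc
    linarith

lemma value_ge {a b : E → V} {E0 : Finset E} {x : E → ℝ} {s t : V}
    (hf : Feas a b E0 x s t) (hn : 2 ≤ Fintype.card V) :
    (Fintype.card V : ℝ) - 1 ≤ ∑ e ∈ E0, x e := by
  classical
  have h1 : ∀ v : V, (2 : ℝ) - (if s = v then 1 else 0) - (if t = v then 1 else 0)
      ≤ dcut a b E0 x {v} := by
    intro v
    have := hf.2 {v} (by simp) (fun h => by
      have := congrArg Finset.card h
      rw [Finset.card_univ] at this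
      simp at this; omega)
    simp only [Finset.mem_singleton] at this
    by_cases hs : s = v <;> by_cases ht : t = v <;> simp [hs, ht] at this ⊢ <;> linarith
  have h2 : ∑ v : V, ((2 : ℝ) - (if s = v then 1 else 0) - (if t = v then 1 else 0))
      ≤ ∑ v, dcut a b E0 x {v} := Finset.sum_le_sum fun v _ => h1 v
  have h3 : ∑ v, dcut a b E0 x {v} ≤ ∑ e ∈ E0, (x e + x e) := by
    simp only [dcut, Finset.sum_filter]
    rw [Finset.sum_comm]
    refine Finset.sum_le_sum fun e _ => ?_
    have : ∑ v : V, ((if a e = v then x e else 0) + (if b e = v then x e else 0)) = x e + x e := by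
      rw [Finset.sum_add_distrib]; simp
    rw [← this]
    refine Finset.sum_le_sum fun v _ => ?_
    have := hf.1 e
    by_cases h1 : a e = v <;> by_cases h2 : b e = v <;> simp [h1, h2, this]
  simp only [Finset.sum_sub_distrib, Finset.sum_const, Finset.card_univ, Finset.sum_ite_eq,
    Finset.mem_univ, if_true, nsmul_eq_mul] at h2
  rw [Finset.sum_add_distrib] at h3
  linarith

end
end TJ

namespace TJ

section
open Classical in
lemma hkCut_eq {V : Type} [Fintype V] (G : SimpleGraph V) (x : Sym2 V → ℝ) (S : Finset V) :
    hkCut G x (S : Set V) =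
      dcut (fun e : Sym2 V => e.out.1) (fun e : Sym2 V => e.out.2) G.edgeFinset x S := by
  unfold hkCut dcut
  have hset : {e ∈ G.edgeSet | ∃ a b, e = s(a, b) ∧ a ∈ (S : Set V) ∧ b ∉ (S : Set V)} =
      ((G.edgeFinset.filter (fun e : Sym2 V => ¬ (e.out.1 ∈ S ↔ e.out.2 ∈ S)) : Finset (Sym2 V)) :
        Set (Sym2 V)) := by
    ext e
    have he : s(e.out.1, e.out.2) = e := Quot.out_eq e
    simp only [Set.mem_sep_iff, Finset.coe_filter, SimpleGraph.mem_edgeFinset, Set.mem_ofPred_eq,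
      Finset.mem_coe]
    refine and_congr_right fun _ => ?_
    constructor
    · rintro ⟨p, q, h, hp, hq⟩
      rw [← he, Sym2.eq_iff] at h
      rcases h with ⟨h1, h2⟩ | ⟨h1, h2⟩
      · rw [h1, h2]; simp [hp, hq]
      · rw [h1, h2]; simp [hp, hq]
    · intro h
      by_cases h1 : e.out.1 ∈ S
      · exact ⟨_, _, he.symm, h1, fun h2 => h (by simp [h1, h2])⟩
      · refine ⟨_, _, he.symm.trans Sym2.eq_swap, ?_, h1⟩
        by_contra h2
        exact h (by simp [h1, h2])
  rw [hset, finsum_mem_coe_finset]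

open Classical in
lemma hkValue_eq {V : Type} [Fintype V] (G : SimpleGraph V) (x : Sym2 V → ℝ) :
    hkValue G x = ∑ e ∈ G.edgeFinset, x e := by
  unfold hkValue
  rw [← SimpleGraph.coe_edgeFinset, finsum_mem_coe_finset]

open Classical in
lemma feas_of {V : Type} [Fintype V] (G : SimpleGraph V) (x : Sym2 V → ℝ) (s t : V)
    (h : HKPathFeasible G s t x) :
    Feas (fun e : Sym2 V => e.out.1) (fun e : Sym2 V => e.out.2) G.edgeFinset x s t := by
  refine ⟨h.1, fun S hS hu => ?_⟩
  have := h.2 (S : Set V) (by simpa using hS) (by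
    intro h'; apply hu; exact Finset.coe_eq_univ.1 h')
  rw [hkCut_eq] at this
  simpa using this

open Classical in
lemma exists_feas {V : Type} [Fintype V] (G : SimpleGraph V) (hG : G.Connected) (s t : V) :
    HKPathFeasible G s t (fun _ => 2) := by
  refine ⟨fun _ => by norm_num, fun S hS hu => ?_⟩
  have key : (2 : ℝ) ≤ hkCut G (fun _ => 2) S := by
    obtain ⟨u, hu1⟩ := hS
    obtain ⟨v, hv⟩ := (Set.ne_univ_iff_exists_notMem S).1 hu
    obtain ⟨w⟩ := hG.preconnected u v
    obtain ⟨d, _, h1, h2⟩ := w.exists_boundary_dart S hu1 hv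
    have hm : d.edge ∈ {e ∈ G.edgeSet | ∃ a b, e = s(a, b) ∧ a ∈ S ∧ b ∉ S} :=
      ⟨d.edge_mem, d.fst, d.snd, rfl, h1, h2⟩
    unfold hkCut
    rw [finsum_mem_eq_finite_toFinset_sum _ (Set.toFinite _)]
    exact Finset.single_le_sum (f := fun _ => (2 : ℝ)) (fun _ _ => by norm_num)
      ((Set.Finite.mem_toFinset _).2 hm)
  exact ⟨fun _ => key, fun _ => by linarith⟩

end
end TJ

/-- For every `ε > 0` there is an `N` such that every connected
simple graph on at least `N` vertices all of whose blocks have maximum degree at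
most 3 admits, for all vertices `s, t`, a spanning walk from `s` to `t` of length
at most `(3/2 + ε) · OLP(G, s, t)`. -/
theorem spanning_path_walk_le_heldKarpPath_blockwise_subcubic :
    ∀ ε : ℝ, 0 < ε → ∃ N : ℕ,
      ∀ (V : Type) [Fintype V] (G : SimpleGraph V),
        N ≤ Fintype.card V → G.Connected →
        (∀ B : Set V, IsBlock G B → ∀ v ∈ B, {u | u ∈ B ∧ G.Adj v u}.ncard ≤ 3) →
        ∀ s t : V,
          ∃ w : G.Walk s t, (∀ u : V, u ∈ w.support) ∧
            (w.length : ℝ) ≤ (3 / 2 + ε) * OLPpath G s t := by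
  classical
  intro ε hε
  refine ⟨2, ?_⟩
  intro V _ G hn hG _ s t
  have hadj : ∀ e ∈ G.edgeFinset, G.Adj (e.out.1) (e.out.2) := by
    intro e he
    rw [SimpleGraph.mem_edgeFinset] at he
    have h : s(e.out.1, e.out.2) = e := Quot.out_eq e
    rw [← h] at he
    exact he
  have hne := TJ.exists_feas G hG s t
  have hwalk := fun x (hx : HKPathFeasible G s t x) =>
    TJ.walk_of_feas G hadj (TJ.feas_of G x s t hx)
  -- shortest spanning walk
  have hex : ∃ n, ∃ w : G.Walk s t, (∀ u : V, u ∈ w.support) ∧ w.length = n := by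
    obtain ⟨w, hw, _⟩ := hwalk _ hne
    exact ⟨_, w, hw, rfl⟩
  obtain ⟨w, hw, hlen⟩ := Nat.find_spec hex
  refine ⟨w, hw, ?_⟩
  have hSne : {y | ∃ x, HKPathFeasible G s t x ∧ y = hkValue G x}.Nonempty := ⟨_, _, hne, rfl⟩
  have h1 : (Fintype.card V : ℝ) - 1 ≤ OLPpath G s t := by
    refine le_csInf hSne ?_
    rintro y ⟨x, hx, rfl⟩
    rw [TJ.hkValue_eq]
    exact TJ.value_ge (TJ.feas_of G x s t hx) hn
  have h2 : 2 * ((w.length : ℝ) - ((Fintype.card V : ℝ) - 1)) ≤ OLPpath G s t := by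
    refine le_csInf hSne ?_
    rintro y ⟨x, hx, rfl⟩
    obtain ⟨w', hw', hl⟩ := hwalk x hx
    have hle : w.length ≤ w'.length := by
      rw [hlen]; exact Nat.find_min' hex ⟨w', hw', rfl⟩
    have hle' : (w.length : ℝ) ≤ w'.length := by exact_mod_cast hle
    rw [TJ.hkValue_eq]
    linarith
  have h3 : (0 : ℝ) ≤ OLPpath G s t := by
    have : (2 : ℝ) ≤ Fintype.card V := by exact_mod_cast hn
    linarith
  nlinarith
end
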